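/- arXiv:2602.14268 — 7 statements merged into one kernel-verified Lean document; each statement's English description precedes it below -/
import Mathlib

section
/- Let K be a real Banach space, let L ≥ 0, h > 0, and let y : ℝ → K be differentiable on [t₀ - h, t₀ + h] with derivative y' satisfying ‖y'(t) - y'(s)‖ ≤ L·|t - s|^(1/2) for all s, t in [t₀ - h, t₀ + h]. Then the symmetric averaging defect satisfies ‖(1/(2h)) ∫_{t₀-h}^{t₀+h} y(θ) dθ - y(t₀)‖ ≤ (4/15)·L·h^(3/2). -/
open MeasureTheory Set intervalIntegral

/-!
If `y'` is `α`-Hölder at `t₀`, the first-order Taylor remainder of `y` at `t₀` is at most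
`L / (α + 1) * |θ - t₀| ^ (α + 1)`. Averaging over an interval centred at `t₀` cancels the linear
Taylor term and gains a factor `1 / (α + 2)` in the remainder bound. For `α = 1/2` the constant is
`1 / ((3/2) * (5/2)) = 4/15`.
-/

section TaylorRemainder

variable {E F : Type*} [NormedAddCommGroup E] [NormedSpace ℝ E]
  [NormedAddCommGroup F] [NormedSpace ℝ F] {L α : ℝ}

theorem norm_image_sub_le_of_norm_deriv_le_rpow {g g' : ℝ → F} {b : ℝ} (hα : 0 ≤ α) (hb : 0 ≤ b)
    (hg : ∀ r ∈ Icc 0 b, HasDerivWithinAt g (g' r) (Icc 0 b) r)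
    (hg' : ∀ r ∈ Ico 0 b, ‖g' r‖ ≤ L * r ^ α) :
    ‖g b - g 0‖ ≤ L / (α + 1) * b ^ (α + 1) := by
  have hα' : α + 1 ≠ 0 := by positivity
  have hbound_deriv : ∀ r, HasDerivAt (fun r ↦ L / (α + 1) * r ^ (α + 1)) (L * r ^ α) r := by
    intro r
    have hpow := Real.hasDerivAt_rpow_const (x := r) (p := α + 1) (Or.inr (by linarith))
    refine (hpow.const_mul (L / (α + 1))).congr_deriv ?_
    rw [add_sub_cancel_right, ← mul_assoc, div_mul_cancel₀ _ hα']
  exact image_norm_le_of_norm_deriv_right_le_deriv_boundary (f := fun r ↦ g r - g 0)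
    (fun r hr ↦ ((hg r hr).sub_const _).continuousWithinAt)
    (fun r hr ↦ ((hg r (Ico_subset_Icc_self hr)).sub_const _).mono_of_mem_nhdsWithin
      (Icc_mem_nhdsGE_of_mem hr))
    (by simp [Real.zero_rpow hα']) hbound_deriv hg' (right_mem_Icc.2 hb)

theorem norm_taylor_one_sub_le_of_hasFDerivWithinAt {f : E → F} {f' : E → E →L[ℝ] F} {s : Set E}
    {a x : E} (hα : 0 ≤ α) (hs : StarConvex ℝ a s)
    (hf : ∀ z ∈ s, HasFDerivWithinAt f (f' z) s z)
    (hf' : ∀ z ∈ s, ‖f' z - f' a‖ ≤ L * ‖z - a‖ ^ α) (hx : x ∈ s) :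
    ‖f x - f a - f' a (x - a)‖ ≤ L / (α + 1) * ‖x - a‖ ^ (α + 1) := by
  let γ : ℝ → E := AffineMap.lineMap a x
  have hγs : MapsTo γ (Icc 0 1) s := fun r hr ↦
    hs.segment_subset hx (segment_eq_image_lineMap ℝ a x ▸ mem_image_of_mem γ hr)
  have hderiv : ∀ r ∈ Icc (0 : ℝ) 1, HasDerivWithinAt
      (fun r ↦ f (γ r) - r • f' a (x - a)) ((f' (γ r) - f' a) (x - a)) (Icc 0 1) r := by
    intro r hr
    have hfγ := (hf _ (hγs hr)).comp_hasDerivWithinAt r AffineMap.hasDerivWithinAt_lineMap hγs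
    refine (hfγ.sub ((hasDerivWithinAt_id r _).smul_const (f' a (x - a)))).congr_deriv ?_
    rw [one_smul, sub_apply]
  have hbound : ∀ r ∈ Ico (0 : ℝ) 1,
      ‖(f' (γ r) - f' a) (x - a)‖ ≤ L * ‖x - a‖ ^ (α + 1) * r ^ α := by
    intro r hr
    have hγr : ‖γ r - a‖ = r * ‖x - a‖ := by
      rw [← dist_eq_norm, dist_lineMap_left, Real.norm_of_nonneg hr.1, dist_comm, dist_eq_norm]
    calc ‖(f' (γ r) - f' a) (x - a)‖
        ≤ L * ‖γ r - a‖ ^ α * ‖x - a‖ :=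
          ContinuousLinearMap.le_of_opNorm_le _ (hf' _ (hγs (Ico_subset_Icc_self hr))) _
      _ = L * ‖x - a‖ ^ (α + 1) * r ^ α := by
          rw [hγr, Real.mul_rpow hr.1 (norm_nonneg _),
            Real.rpow_add_one' (norm_nonneg _) (by positivity)]
          ring
  have hremainder := norm_image_sub_le_of_norm_deriv_le_rpow hα zero_le_one hderiv hbound
  calc ‖f x - f a - f' a (x - a)‖
      = ‖f (γ 1) - (1 : ℝ) • f' a (x - a) - (f (γ 0) - (0 : ℝ) • f' a (x - a))‖ := by
        simp only [γ, AffineMap.lineMap_apply_one, AffineMap.lineMap_apply_zero, one_smul,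
          zero_smul, sub_zero, sub_right_comm]
    _ ≤ L * ‖x - a‖ ^ (α + 1) / (α + 1) * 1 ^ (α + 1) := hremainder
    _ = L / (α + 1) * ‖x - a‖ ^ (α + 1) := by rw [Real.one_rpow]; ring

theorem norm_taylor_one_sub_le_of_hasDerivWithinAt {f f' : ℝ → F} {s : Set ℝ} {a x : ℝ}
    (hα : 0 ≤ α) (hs : StarConvex ℝ a s) (hf : ∀ t ∈ s, HasDerivWithinAt f (f' t) s t)
    (hf' : ∀ t ∈ s, ‖f' t - f' a‖ ≤ L * |t - a| ^ α) (hx : x ∈ s) :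
    ‖f x - f a - (x - a) • f' a‖ ≤ L / (α + 1) * |x - a| ^ (α + 1) :=
  norm_taylor_one_sub_le_of_hasFDerivWithinAt
    (f' := fun t ↦ ContinuousLinearMap.toSpanSingletonLIE ℝ F (f' t)) hα hs
    (fun t ht ↦ (hf t ht).hasFDerivWithinAt)
    (fun t ht ↦ by
      simpa only [← map_sub, LinearIsometryEquiv.norm_map, Real.norm_eq_abs] using hf' t ht) hx

end TaylorRemainder

section CenteredIntegral

variable {E : Type*} [NormedAddCommGroup E] [NormedSpace ℝ E] {a h : ℝ}

theorem intervalIntegral_comp_abs_neg_self {g : ℝ → E} (hh : 0 ≤ h)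
    (hg : IntervalIntegrable g volume 0 h) :
    ∫ x in -h..h, g |x| = (2 : ℝ) • ∫ x in 0..h, g x := by
  have hpos : EqOn (fun x ↦ g |x|) g (uIcc 0 h) := fun x hx ↦ by
    rw [uIcc_of_le hh] at hx
    simp only [abs_of_nonneg hx.1]
  have hint_right : IntervalIntegrable (fun x ↦ g |x|) volume 0 h :=
    hg.congr fun x hx ↦ (hpos (uIoc_subset_uIcc hx)).symm
  have hint_left : IntervalIntegrable (fun x ↦ g |x|) volume (-h) 0 :=
    IntervalIntegrable.iff_comp_neg (by finiteness) |>.2 (by simpa using hint_right.symm)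
  have hleft : ∫ x in -h..0, g |x| = ∫ x in 0..h, g |x| := by
    simpa using (intervalIntegral.integral_comp_neg (a := 0) (b := h) fun x ↦ g |x|).symm
  rw [← intervalIntegral.integral_add_adjacent_intervals hint_left hint_right, hleft,
    intervalIntegral.integral_congr hpos, two_smul]

theorem intervalIntegral_abs_sub_rpow {p : ℝ} (hp : -1 < p) (hh : 0 ≤ h) :
    ∫ x in (a - h)..(a + h), |x - a| ^ p = 2 * h ^ (p + 1) / (p + 1) := by
  have hp' : p + 1 ≠ 0 := by linarith
  rw [intervalIntegral.integral_comp_sub_right (fun x ↦ |x| ^ p) a, sub_sub_cancel_left,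
    add_sub_cancel_left,
    intervalIntegral_comp_abs_neg_self hh (intervalIntegral.intervalIntegrable_rpow' hp),
    integral_rpow (Or.inl hp), Real.zero_rpow hp', sub_zero, smul_eq_mul, mul_div_assoc]

variable [CompleteSpace E]

theorem centered_average_sub_eq {f : ℝ → E} (hh : 0 < h)
    (hf : IntervalIntegrable f volume (a - h) (a + h)) (c v : E) :
    (1 / (2 * h)) • (∫ x in (a - h)..(a + h), f x) - c =
      (1 / (2 * h)) • ∫ x in (a - h)..(a + h), (f x - c - (x - a) • v) := by
  have hlinear : ∫ x in (a - h)..(a + h), (x - a) • v = 0 := by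
    rw [intervalIntegral.integral_smul_const,
      intervalIntegral.integral_comp_sub_right (fun x ↦ x) a]
    simp
  have hwidth : a + h - (a - h) = 2 * h := by ring
  have hlinear_int : IntervalIntegrable (fun x ↦ (x - a) • v) volume (a - h) (a + h) :=
    Continuous.intervalIntegrable (by fun_prop) _ _
  rw [intervalIntegral.integral_sub (hf.sub intervalIntegrable_const) hlinear_int, hlinear,
    sub_zero, intervalIntegral.integral_sub hf intervalIntegrable_const,
    intervalIntegral.integral_const, hwidth, smul_sub, smul_smul,
    one_div_mul_cancel (by positivity), one_smul]

theorem norm_centered_average_sub_le {f : ℝ → E} {c v : E} {C p : ℝ} (hp : 0 ≤ p) (hh : 0 < h)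
    (hf : IntervalIntegrable f volume (a - h) (a + h))
    (hfC : ∀ x ∈ Icc (a - h) (a + h), ‖f x - c - (x - a) • v‖ ≤ C * |x - a| ^ p) :
    ‖(1 / (2 * h)) • (∫ x in (a - h)..(a + h), f x) - c‖ ≤ C / (p + 1) * h ^ p := by
  have hmajorant : IntervalIntegrable (fun x ↦ C * |x - a| ^ p) volume (a - h) (a + h) :=
    Continuous.intervalIntegrable (by fun_prop (disch := assumption)) _ _
  calc ‖(1 / (2 * h)) • (∫ x in (a - h)..(a + h), f x) - c‖
      = 1 / (2 * h) * ‖∫ x in (a - h)..(a + h), (f x - c - (x - a) • v)‖ := by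
        rw [centered_average_sub_eq hh hf c v, norm_smul, Real.norm_of_nonneg (by positivity)]
    _ ≤ 1 / (2 * h) * ∫ x in (a - h)..(a + h), C * |x - a| ^ p := by
        gcongr
        exact intervalIntegral.norm_integral_le_of_norm_le (by linarith)
          (.of_forall fun x hx ↦ hfC x (Ioc_subset_Icc_self hx)) hmajorant
    _ = C / (p + 1) * h ^ p := by
        rw [intervalIntegral.integral_const_mul, intervalIntegral_abs_sub_rpow (by linarith) hh.le,
          Real.rpow_add_one hh.ne']
        field_simp

end CenteredIntegral

theorem midpoint_average_defect_general
    {K : Type*} [NormedAddCommGroup K] [NormedSpace ℝ K] [CompleteSpace K]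
    {L α h t₀ : ℝ} (hα : 0 ≤ α) (hh : 0 < h) {y y' : ℝ → K}
    (hderiv : ∀ t ∈ Icc (t₀ - h) (t₀ + h),
      HasDerivWithinAt y (y' t) (Icc (t₀ - h) (t₀ + h)) t)
    (hhold : ∀ t ∈ Icc (t₀ - h) (t₀ + h), ‖y' t - y' t₀‖ ≤ L * |t - t₀| ^ α) :
    ‖(1 / (2 * h)) • (∫ θ in (t₀ - h)..(t₀ + h), y θ) - y t₀‖
      ≤ L / ((α + 1) * (α + 2)) * h ^ (α + 1) := by
  have ht₀ : t₀ ∈ Icc (t₀ - h) (t₀ + h) := ⟨by linarith, by linarith⟩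
  have hy : IntervalIntegrable y volume (t₀ - h) (t₀ + h) :=
    ContinuousOn.intervalIntegrable_of_Icc (by linarith)
      fun t ht ↦ (hderiv t ht).continuousWithinAt
  have hdefect := norm_centered_average_sub_le (by positivity) hh hy fun t ht ↦
    norm_taylor_one_sub_le_of_hasDerivWithinAt hα ((convex_Icc _ _).starConvex ht₀) hderiv hhold ht
  rwa [div_div, add_assoc α 1 1, one_add_one_eq_two] at hdefect

/-- Mid-cell averaging defect for a function with 1/2-Hölder derivative:
`‖(1/(2h)) ∫_{t₀-h}^{t₀+h} y(θ) dθ - y(t₀)‖ ≤ (4/15) L h^{3/2}`. -/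
theorem midpoint_average_defect
    {K : Type*} [NormedAddCommGroup K] [NormedSpace ℝ K] [CompleteSpace K]
    (L h t₀ : ℝ) (hL : 0 ≤ L) (hh : 0 < h)
    (y y' : ℝ → K)
    (hderiv : ∀ t ∈ Icc (t₀ - h) (t₀ + h),
      HasDerivWithinAt y (y' t) (Icc (t₀ - h) (t₀ + h)) t)
    (hhold : ∀ s ∈ Icc (t₀ - h) (t₀ + h), ∀ t ∈ Icc (t₀ - h) (t₀ + h),
      ‖y' t - y' s‖ ≤ L * |t - s| ^ ((1 : ℝ) / 2)) :
    ‖(1 / (2 * h)) • (∫ θ in (t₀ - h)..(t₀ + h), y θ) - y t₀‖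
      ≤ (4 / 15) * L * h ^ ((3 : ℝ) / 2) := by
  have ht₀ : t₀ ∈ Icc (t₀ - h) (t₀ + h) := ⟨by linarith, by linarith⟩
  convert midpoint_average_defect_general (by norm_num) hh hderiv (hhold t₀ ht₀) using 2
  · ring
  · norm_num
end

section
/- Let K be a real Banach space, let L ≥ 0, h > 0, and let y : ℝ → K be differentiable on [t₀ - 3h, t₀] with derivative y' satisfying ‖y'(t) - y'(s)‖ ≤ L·|t - s|^(1/2) for all s, t in [t₀ - 3h, t₀]. Then the BDF2 extrapolation defect satisfies ‖y(t₀) - (3/2)·y(t₀ - h) + (1/2)·y(t₀ - 3h)‖ ≤ L·( (2/3)·h^(3/2) + (1/3)·((3h)^(3/2) - h^(3/2)) ). -/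
open MeasureTheory Set intervalIntegral

/-!
Subtracting from `y` the linear function with slope `y' t₀` leaves a function whose derivative is
at most `L (t₀ - x) ^ α`, so its increment over `[a, b] ⊆ (-∞, t₀]` is at most the integral of that
bound. The BDF2 defect kills affine functions: it is the increment over `[t₀ - h, t₀]`, of length
`h`, minus half the increment over `[t₀ - 3h, t₀ - h]`, of length `2h`, so the two multiples of
`y' t₀` cancel.
-/

section Increments

variable {E : Type*} [NormedAddCommGroup E] [NormedSpace ℝ E] {a b : ℝ} {f f' : ℝ → E} {v : E}

theorem norm_sub_sub_smul_le_of_norm_deriv_right_sub_le {B B' : ℝ → ℝ} (hab : a ≤ b)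
    (hf : ContinuousOn f (Icc a b))
    (hf' : ∀ x ∈ Ico a b, HasDerivWithinAt f (f' x) (Ici x) x)
    (hB : ContinuousOn B (Icc a b))
    (hB' : ∀ x ∈ Ico a b, HasDerivWithinAt B (B' x) (Ici x) x)
    (bound : ∀ x ∈ Ico a b, ‖f' x - v‖ ≤ B' x) :
    ‖f b - f a - (b - a) • v‖ ≤ B b - B a := by
  have hlin (x : ℝ) : HasDerivWithinAt (fun t : ℝ ↦ (t - a) • v) v (Ici x) x := by
    simpa using (((hasDerivAt_id x).sub_const a).smul_const v).hasDerivWithinAt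
  exact image_norm_le_of_norm_deriv_right_le_deriv_boundary'
    (f := fun t ↦ f t - f a - (t - a) • v) (B := fun t ↦ B t - B a)
    (by fun_prop) (fun x hx ↦ ((hf' x hx).sub_const (f a)).sub (hlin x)) (by simp)
    (by fun_prop) (fun x hx ↦ (hB' x hx).sub_const (B a)) bound (right_mem_Icc.2 hab)

theorem hasDerivAt_neg_const_sub_rpow_div {α c x : ℝ} (hα : α + 1 ≠ 0) (hx : x ≠ c) :
    HasDerivAt (fun t ↦ -((c - t) ^ (α + 1) / (α + 1))) ((c - x) ^ α) x := by
  have hrpow := ((hasDerivAt_id x).const_sub c).rpow_const (p := α + 1)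
    (Or.inl (sub_ne_zero.2 hx.symm))
  refine (hrpow.div_const (α + 1)).neg.congr_deriv ?_
  rw [id, add_sub_cancel_right]
  field_simp

theorem norm_sub_sub_smul_le_of_norm_deriv_right_sub_le_rpow {C α c : ℝ} (hα : -1 < α)
    (hab : a ≤ b) (hbc : b ≤ c) (hf : ContinuousOn f (Icc a b))
    (hf' : ∀ x ∈ Ico a b, HasDerivWithinAt f (f' x) (Ici x) x)
    (bound : ∀ x ∈ Ico a b, ‖f' x - v‖ ≤ C * (c - x) ^ α) :
    ‖f b - f a - (b - a) • v‖ ≤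
      C / (α + 1) * ((c - a) ^ (α + 1) - (c - b) ^ (α + 1)) := by
  have hα' : 0 < α + 1 := by linarith
  have hcont : Continuous fun t ↦ C * -((c - t) ^ (α + 1) / (α + 1)) := by
    have : Continuous fun t ↦ (c - t) ^ (α + 1) :=
      (continuous_const.sub continuous_id).rpow_const fun _ ↦ Or.inr hα'.le
    fun_prop
  calc ‖f b - f a - (b - a) • v‖
      ≤ C * -((c - b) ^ (α + 1) / (α + 1)) - C * -((c - a) ^ (α + 1) / (α + 1)) :=
        norm_sub_sub_smul_le_of_norm_deriv_right_sub_le hab hf hf' hcont.continuousOn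
          (fun x hx ↦ ((hasDerivAt_neg_const_sub_rpow_div hα'.ne'
            (hx.2.trans_le hbc).ne).const_mul C).hasDerivWithinAt) bound
    _ = C / (α + 1) * ((c - a) ^ (α + 1) - (c - b) ^ (α + 1)) := by ring

end Increments

theorem bdf2_extrapolation_defect_general
    {E : Type*} [NormedAddCommGroup E] [NormedSpace ℝ E]
    {L h t₀ α : ℝ} (hα : -1 < α) (hh : 0 ≤ h) {y y' : ℝ → E}
    (hderiv : ∀ t ∈ Icc (t₀ - 3 * h) t₀,
      HasDerivWithinAt y (y' t) (Icc (t₀ - 3 * h) t₀) t)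
    (hhold : ∀ t ∈ Ico (t₀ - 3 * h) t₀, ‖y' t - y' t₀‖ ≤ L * (t₀ - t) ^ α) :
    ‖y t₀ - (3 / 2 : ℝ) • y (t₀ - h) + (1 / 2 : ℝ) • y (t₀ - 3 * h)‖ ≤
      L / (α + 1) * (h ^ (α + 1) + (1 / 2) * ((3 * h) ^ (α + 1) - h ^ (α + 1))) := by
  have increment {a b : ℝ} (ha : t₀ - 3 * h ≤ a) (hab : a ≤ b) (hb : b ≤ t₀) :
      ‖y b - y a - (b - a) • y' t₀‖ ≤
        L / (α + 1) * ((t₀ - a) ^ (α + 1) - (t₀ - b) ^ (α + 1)) :=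
    have hsub : Ico a b ⊆ Ico (t₀ - 3 * h) t₀ := Ico_subset_Ico ha hb
    norm_sub_sub_smul_le_of_norm_deriv_right_sub_le_rpow hα hab hb
      ((HasDerivWithinAt.continuousOn hderiv).mono (Icc_subset_Icc ha hb))
      (fun x hx ↦ (hderiv x (Ico_subset_Icc_self (hsub hx))).mono_of_mem_nhdsWithin
        (Icc_mem_nhdsGE_of_mem (hsub hx)))
      (fun x hx ↦ hhold x (hsub hx))
  have hnear : ‖y t₀ - y (t₀ - h) - h • y' t₀‖ ≤ L / (α + 1) * h ^ (α + 1) := by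
    simpa [Real.zero_rpow (by linarith : α + 1 ≠ 0)] using
      increment (a := t₀ - h) (b := t₀) (by linarith) (by linarith) le_rfl
  have hfar : ‖y (t₀ - h) - y (t₀ - 3 * h) - (2 * h) • y' t₀‖ ≤
      L / (α + 1) * ((3 * h) ^ (α + 1) - h ^ (α + 1)) := by
    convert increment (a := t₀ - 3 * h) (b := t₀ - h) le_rfl (by linarith) (by linarith)
      using 4 <;> ring_nf
  calc ‖y t₀ - (3 / 2 : ℝ) • y (t₀ - h) + (1 / 2 : ℝ) • y (t₀ - 3 * h)‖
      = ‖(y t₀ - y (t₀ - h) - h • y' t₀) -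
          (1 / 2 : ℝ) • (y (t₀ - h) - y (t₀ - 3 * h) - (2 * h) • y' t₀)‖ := by
        congr 1; module
    _ ≤ ‖y t₀ - y (t₀ - h) - h • y' t₀‖ +
          1 / 2 * ‖y (t₀ - h) - y (t₀ - 3 * h) - (2 * h) • y' t₀‖ :=
        (norm_sub_le _ _).trans_eq (by rw [norm_smul_of_nonneg (by norm_num)])
    _ ≤ L / (α + 1) * (h ^ (α + 1) + (1 / 2) * ((3 * h) ^ (α + 1) - h ^ (α + 1))) := by
        linarith

/-- BDF2 extrapolation defect for a function with 1/2-Hölder derivative: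
`‖y(t₀) - (3/2) y(t₀-h) + (1/2) y(t₀-3h)‖ ≤ L ((2/3) h^{3/2} + (1/3)((3h)^{3/2} - h^{3/2}))`. -/
theorem bdf2_extrapolation_defect
    {K : Type*} [NormedAddCommGroup K] [NormedSpace ℝ K] [CompleteSpace K]
    (L h t₀ : ℝ) (hL : 0 ≤ L) (hh : 0 < h)
    (y y' : ℝ → K)
    (hderiv : ∀ t ∈ Icc (t₀ - 3 * h) t₀,
      HasDerivWithinAt y (y' t) (Icc (t₀ - 3 * h) t₀) t)
    (hhold : ∀ s ∈ Icc (t₀ - 3 * h) t₀, ∀ t ∈ Icc (t₀ - 3 * h) t₀,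
      ‖y' t - y' s‖ ≤ L * |t - s| ^ ((1 : ℝ) / 2)) :
    ‖y t₀ - (3 / 2 : ℝ) • y (t₀ - h) + (1 / 2 : ℝ) • y (t₀ - 3 * h)‖
      ≤ L * ((2 / 3) * h ^ ((3 : ℝ) / 2)
          + (1 / 3) * ((3 * h) ^ ((3 : ℝ) / 2) - h ^ ((3 : ℝ) / 2))) := by
  have hhold₀ : ∀ t ∈ Ico (t₀ - 3 * h) t₀, ‖y' t - y' t₀‖ ≤ L * (t₀ - t) ^ ((1 : ℝ) / 2) :=
    fun t ht ↦ by
      simpa only [abs_sub_comm t, abs_of_pos (sub_pos.2 ht.2)] using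
        hhold t₀ (right_mem_Icc.2 (by linarith)) t (Ico_subset_Icc_self ht)
  convert bdf2_extrapolation_defect_general (by norm_num) hh.le hderiv hhold₀ using 1
  rw [show (1 : ℝ) / 2 + 1 = 3 / 2 by norm_num]
  ring
end

section
/- Let K be a real Banach space, let T > 0, L ≥ 0, τ > 0, and let y : ℝ → K be differentiable on [0, T] with derivative y' satisfying ‖y'(t) - y'(s)‖ ≤ L·|t - s|^(1/2) for all s, t ∈ [0, T]. Then there exists an absolute constant C > 0 (independent of y, L, τ, T, K) such that for every tₙ with [tₙ - τ, tₙ + τ] ⊆ [0, T], the combined extrapolation error satisfies ‖ (1/τ) ∫_{tₙ}^{tₙ+τ} y(s) ds - ( (3/2)·y(tₙ) - (1/2)·y(tₙ - τ) ) ‖ ≤ C·L·τ^(3/2). -/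
open MeasureTheory Set intervalIntegral

universe u

/-!
The average over `[tₙ, tₙ + τ]` and the BDF2 extrapolation both send an affine function to its value
at the midpoint `tₙ + τ / 2`, so only the first-order Taylor remainder of `y` at `tₙ` contributes to
the defect. If `‖y' s - y' tₙ‖ ≤ L |s - tₙ| ^ r`, this remainder is at most
`L / (1 + r) * |s - tₙ| ^ (1 + r)`.
-/

section TaylorRemainder

variable {E F : Type*} [NormedAddCommGroup E] [NormedSpace ℝ E] [NormedAddCommGroup F]
  [NormedSpace ℝ F] {L r : ℝ}

lemma norm_image_sub_le_of_norm_hasDerivWithin_le_mul_rpow {f f' : ℝ → F} {a b : ℝ} (hab : a ≤ b)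
    (hr : 0 ≤ r) (hf : ∀ u ∈ Icc a b, HasDerivWithinAt f (f' u) (Icc a b) u)
    (hf' : ∀ u ∈ Icc a b, ‖f' u‖ ≤ L * (u - a) ^ r) :
    ‖f b - f a‖ ≤ L / (1 + r) * (b - a) ^ (1 + r) := by
  have h_zero : (0 : ℝ) ^ (1 + r) = 0 := Real.zero_rpow (by positivity)
  have h_bound_deriv (u : ℝ) :
      HasDerivAt (fun v ↦ L / (1 + r) * (v - a) ^ (1 + r)) (L * (u - a) ^ r) u := by
    convert! (((hasDerivAt_id u).sub_const a).rpow_const (p := 1 + r)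
      (Or.inr (by linarith))).const_mul (L / (1 + r)) using 1
    rw [add_sub_cancel_left, id_eq]
    field_simp
  exact image_norm_le_of_norm_deriv_right_le_deriv_boundary
    (fun u hu ↦ ((hf u hu).sub_const (f a)).continuousWithinAt)
    (fun u hu ↦ ((hf u (Ico_subset_Icc_self hu)).sub_const (f a)).mono_of_mem_nhdsWithin
      (Icc_mem_nhdsGE_of_mem hu))
    (by simp [h_zero]) h_bound_deriv (fun u hu ↦ hf' u (Ico_subset_Icc_self hu))
    (right_mem_Icc.2 hab)

lemma norm_image_sub_sub_le_of_norm_hasFDerivWithin_sub_le_rpow {f : E → F} {f' : E → E →L[ℝ] F}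
    {s : Set E} {a x : E} (hs : Convex ℝ s) (hr : 0 ≤ r)
    (hf : ∀ z ∈ s, HasFDerivWithinAt f (f' z) s z)
    (hf' : ∀ z ∈ s, ‖f' z - f' a‖ ≤ L * ‖z - a‖ ^ r) (ha : a ∈ s) (hx : x ∈ s) :
    ‖f x - f a - f' a (x - a)‖ ≤ L / (1 + r) * ‖x - a‖ ^ (1 + r) := by
  let γ : ℝ → E := AffineMap.lineMap a x
  have hγ_mem : MapsTo γ (Icc 0 1) s := fun u hu ↦ hs.lineMap_mem ha hx hu
  have hγ_sub (u : ℝ) : γ u - a = u • (x - a) := AffineMap.lineMap_vsub_left a x u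
  have h_deriv : ∀ u ∈ Icc (0 : ℝ) 1, HasDerivWithinAt (fun v ↦ f (γ v) - v • f' a (x - a))
      ((f' (γ u) - f' a) (x - a)) (Icc 0 1) u := fun u hu ↦ by
    simpa only [one_smul] using! ((hf _ (hγ_mem hu)).comp_hasDerivWithinAt u
      AffineMap.hasDerivWithinAt_lineMap hγ_mem).sub
        ((hasDerivWithinAt_id u _).smul_const (f' a (x - a)))
  have h_deriv_le : ∀ u ∈ Icc (0 : ℝ) 1,
      ‖(f' (γ u) - f' a) (x - a)‖ ≤ L * ‖x - a‖ ^ (1 + r) * (u - 0) ^ r := fun u hu ↦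
    calc ‖(f' (γ u) - f' a) (x - a)‖
        ≤ ‖f' (γ u) - f' a‖ * ‖x - a‖ := ContinuousLinearMap.le_opNorm _ _
      _ ≤ L * ‖γ u - a‖ ^ r * ‖x - a‖ := by gcongr; exact hf' _ (hγ_mem hu)
      _ = L * ‖x - a‖ ^ (1 + r) * (u - 0) ^ r := by
          rw [hγ_sub, norm_smul_of_nonneg hu.1, Real.mul_rpow hu.1 (norm_nonneg _),
            Real.rpow_one_add' (norm_nonneg _) (by positivity), sub_zero]
          ring
  calc ‖f x - f a - f' a (x - a)‖
      = ‖(f (γ 1) - (1 : ℝ) • f' a (x - a)) - (f (γ 0) - (0 : ℝ) • f' a (x - a))‖ := by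
        simp only [γ, AffineMap.lineMap_apply_one, AffineMap.lineMap_apply_zero, one_smul,
          zero_smul, sub_zero, sub_right_comm]
    _ ≤ L * ‖x - a‖ ^ (1 + r) / (1 + r) * (1 - 0) ^ (1 + r) :=
        norm_image_sub_le_of_norm_hasDerivWithin_le_mul_rpow zero_le_one hr h_deriv h_deriv_le
    _ = L / (1 + r) * ‖x - a‖ ^ (1 + r) := by rw [sub_zero, Real.one_rpow]; ring

lemma norm_image_sub_sub_le_of_norm_hasDerivWithin_sub_le_rpow {f f' : ℝ → F} {s : Set ℝ} {a x : ℝ}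
    (hs : Convex ℝ s) (hr : 0 ≤ r) (hf : ∀ z ∈ s, HasDerivWithinAt f (f' z) s z)
    (hf' : ∀ z ∈ s, ‖f' z - f' a‖ ≤ L * |z - a| ^ r) (ha : a ∈ s) (hx : x ∈ s) :
    ‖f x - f a - (x - a) • f' a‖ ≤ L / (1 + r) * |x - a| ^ (1 + r) := by
  refine norm_image_sub_sub_le_of_norm_hasFDerivWithin_sub_le_rpow
    (f' := fun z ↦ ContinuousLinearMap.toSpanSingletonLIE ℝ F (f' z)) hs hr
    (fun z hz ↦ (hf z hz).hasFDerivWithinAt) (fun z hz ↦ ?_) ha hx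
  rw [← map_sub, LinearIsometryEquiv.norm_map]
  exact hf' z hz

lemma norm_integral_sub_sub_le_of_norm_hasDerivWithin_sub_le_rpow [CompleteSpace F] {f f' : ℝ → F}
    {a b : ℝ} (hab : a ≤ b) (hr : 0 ≤ r)
    (hf : ∀ z ∈ Icc a b, HasDerivWithinAt f (f' z) (Icc a b) z)
    (hf' : ∀ z ∈ Icc a b, ‖f' z - f' a‖ ≤ L * |z - a| ^ r) :
    ‖(∫ x in a..b, f x) - (b - a) • f a - ((b - a) ^ 2 / 2) • f' a‖
      ≤ L / ((1 + r) * (2 + r)) * (b - a) ^ (2 + r) := by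
  have hf_int : IntervalIntegrable f volume a b :=
    ContinuousOn.intervalIntegrable_of_Icc hab fun z hz ↦ (hf z hz).continuousWithinAt
  have h_integral : ∫ x in a..b, (f x - f a - (x - a) • f' a)
      = (∫ x in a..b, f x) - (b - a) • f a - ((b - a) ^ 2 / 2) • f' a := by
    rw [intervalIntegral.integral_sub (hf_int.sub intervalIntegrable_const)
        (Continuous.intervalIntegrable (by fun_prop) _ _),
      intervalIntegral.integral_sub hf_int intervalIntegrable_const,
      intervalIntegral.integral_const, intervalIntegral.integral_smul_const,
      intervalIntegral.integral_comp_sub_right (fun x ↦ x) a, integral_id]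
    simp
  have h_remainder : ∀ x ∈ Ioc a b,
      ‖f x - f a - (x - a) • f' a‖ ≤ L / (1 + r) * (x - a) ^ (1 + r) := fun x hx ↦ by
    simpa only [abs_of_pos (sub_pos.2 hx.1)] using
      norm_image_sub_sub_le_of_norm_hasDerivWithin_sub_le_rpow (convex_Icc a b) hr hf hf'
        (left_mem_Icc.2 hab) (Ioc_subset_Icc_self hx)
  have h_bound_cont : Continuous fun x : ℝ ↦ L / (1 + r) * (x - a) ^ (1 + r) :=
    continuous_const.mul
      ((continuous_id.sub continuous_const).rpow_const fun _ ↦ Or.inr (by positivity))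
  rw [← h_integral]
  calc ‖∫ x in a..b, (f x - f a - (x - a) • f' a)‖
      ≤ ∫ x in a..b, L / (1 + r) * (x - a) ^ (1 + r) :=
        norm_integral_le_of_norm_le hab (.of_forall h_remainder)
          (h_bound_cont.intervalIntegrable _ _)
    _ = L / (1 + r) * ((b - a) ^ (2 + r) / (2 + r)) := by
        rw [intervalIntegral.integral_const_mul,
          intervalIntegral.integral_comp_sub_right (fun x ↦ x ^ (1 + r)) a,
          integral_rpow (Or.inl (by linarith)), sub_self, show 1 + r + 1 = 2 + r by ring,
          Real.zero_rpow (by positivity), sub_zero]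
    _ = L / ((1 + r) * (2 + r)) * (b - a) ^ (2 + r) := by field_simp

end TaylorRemainder

theorem bdf2_average_extrapolation_error_general {K : Type*} [NormedAddCommGroup K]
    [NormedSpace ℝ K] [CompleteSpace K] {y y' : ℝ → K} {t τ L r : ℝ} (hτ : 0 < τ) (hr : 0 ≤ r)
    (hy : ∀ s ∈ Icc (t - τ) (t + τ), HasDerivWithinAt y (y' s) (Icc (t - τ) (t + τ)) s)
    (hy' : ∀ s ∈ Icc (t - τ) (t + τ), ‖y' s - y' t‖ ≤ L * |s - t| ^ r) :
    ‖(1 / τ) • (∫ s in t..(t + τ), y s) - ((3 / 2 : ℝ) • y t - (1 / 2 : ℝ) • y (t - τ))‖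
      ≤ (4 + r) / (2 * (1 + r) * (2 + r)) * L * τ ^ (1 + r) := by
  have h_right : Icc t (t + τ) ⊆ Icc (t - τ) (t + τ) := Icc_subset_Icc_left (by linarith)
  have h_average : ‖(∫ s in t..(t + τ), y s) - τ • y t - (τ ^ 2 / 2) • y' t‖
      ≤ L / ((1 + r) * (2 + r)) * τ ^ (2 + r) := by
    simpa only [add_sub_cancel_left] using
      norm_integral_sub_sub_le_of_norm_hasDerivWithin_sub_le_rpow (by linarith) hr
        (fun s hs ↦ (hy s (h_right hs)).mono h_right) fun s hs ↦ hy' s (h_right hs)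
  have h_past : ‖y (t - τ) - y t - (-τ) • y' t‖ ≤ L / (1 + r) * τ ^ (1 + r) := by
    simpa only [sub_sub_cancel_left, abs_neg, abs_of_pos hτ] using
      norm_image_sub_sub_le_of_norm_hasDerivWithin_sub_le_rpow (x := t - τ)
        (convex_Icc _ _) hr hy hy' ⟨by linarith, by linarith⟩ ⟨le_rfl, by linarith⟩
  set I := ∫ s in t..(t + τ), y s
  calc ‖(1 / τ) • I - ((3 / 2 : ℝ) • y t - (1 / 2 : ℝ) • y (t - τ))‖
      = ‖(1 / τ) • (I - τ • y t - (τ ^ 2 / 2) • y' t)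
          + (1 / 2 : ℝ) • (y (t - τ) - y t - (-τ) • y' t)‖ := by
        congr 1
        match_scalars <;> field_simp <;> ring
    _ ≤ 1 / τ * ‖I - τ • y t - (τ ^ 2 / 2) • y' t‖
          + 1 / 2 * ‖y (t - τ) - y t - (-τ) • y' t‖ := by
        refine (norm_add_le _ _).trans_eq ?_
        rw [norm_smul_of_nonneg (by positivity), norm_smul_of_nonneg (by positivity)]
    _ ≤ 1 / τ * (L / ((1 + r) * (2 + r)) * τ ^ (2 + r))
          + 1 / 2 * (L / (1 + r) * τ ^ (1 + r)) := by gcongr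
    _ = (4 + r) / (2 * (1 + r) * (2 + r)) * L * τ ^ (1 + r) := by
        rw [show 2 + r = 1 + r + 1 by ring, Real.rpow_add_one hτ.ne']
        field_simp
        ring

/-- Combined midpoint-averaging/BDF2 extrapolation error: there is an absolute
constant `C > 0` such that for any Banach space `K`, any `y` with 1/2-Hölder
derivative on `[0,T]` and any `tₙ` with `[tₙ-τ, tₙ+τ] ⊆ [0,T]`,
`‖(1/τ) ∫_{tₙ}^{tₙ+τ} y(s) ds - ((3/2) y(tₙ) - (1/2) y(tₙ-τ))‖ ≤ C L τ^{3/2}`. -/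
theorem bdf2_average_extrapolation_error :
    ∃ C : ℝ, 0 < C ∧
      ∀ (K : Type u) [NormedAddCommGroup K] [NormedSpace ℝ K] [CompleteSpace K]
        (T L τ : ℝ), 0 < T → 0 ≤ L → 0 < τ →
      ∀ (y y' : ℝ → K),
        (∀ t ∈ Icc (0 : ℝ) T, HasDerivWithinAt y (y' t) (Icc (0 : ℝ) T) t) →
        (∀ s ∈ Icc (0 : ℝ) T, ∀ t ∈ Icc (0 : ℝ) T,
          ‖y' t - y' s‖ ≤ L * |t - s| ^ ((1 : ℝ) / 2)) →
      ∀ tₙ : ℝ, Icc (tₙ - τ) (tₙ + τ) ⊆ Icc (0 : ℝ) T →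
        ‖(1 / τ) • (∫ s in tₙ..(tₙ + τ), y s)
            - ((3 / 2 : ℝ) • y tₙ - (1 / 2 : ℝ) • y (tₙ - τ))‖
          ≤ C * L * τ ^ ((3 : ℝ) / 2) := by
  refine ⟨3 / 5, by norm_num, fun K _ _ _ T L τ _ _ hτ y y' hy hy' t hsub ↦ ?_⟩
  convert bdf2_average_extrapolation_error_general (r := 1 / 2) hτ (by norm_num)
    (fun s hs ↦ (hy s (hsub hs)).mono hsub)
    (fun s hs ↦ hy' t (hsub ⟨by linarith, by linarith⟩) s (hsub hs)) using 2 <;> norm_num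
end

section
/- Let (Ω, 𝔉, ℙ) be a probability space and let W : [0, ∞) × Ω → ℝ be a jointly measurable stochastic process such that W(t) is square-integrable for each t, 𝔼[W(t)] = 0 for all t ≥ 0, and 𝔼[W(s)·W(t)] = min(s, t) for all s, t ≥ 0. Let a ≥ 0, M a positive integer, h > 0, and τ := M·h. Then the mean-square error between the time average of W over [a, a+τ] and its right-endpoint Riemann sum on the fine mesh of step h satisfies 𝔼[ ( (1/τ) ∫_a^{a+τ} W(s) ds - (1/M) Σ_{ℓ=1}^{M} W(a + ℓ·h) )² ] = h²/(3τ). In particular, if h = τ² (so M = 1/τ for τ the reciprocal of a positive integer), this error equals τ³/3, hence is at most τ³. -/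
open MeasureTheory Set intervalIntegral

/-!
On each cell `(l, r]` of a partition the quadrature error is `∫ s in l..r, (W s - W r)`. It only
involves increments of `W` over `[l, r]`, so the errors of different cells are orthogonal in
`L²`, and by Fubini each has second moment
`∫ s in l..r, ∫ t in l..r, (r - max s t) = (r - l) ^ 3 / 3`. By Pythagoras the squared error of the
Riemann sum is the sum of these, which is `M * h ^ 3 / 3` for the uniform mesh.
-/

open scoped ENNReal

section SquareIntegrable

variable {α β γ Ω : Type*} [MeasurableSpace α] [MeasurableSpace β] [MeasurableSpace γ]
  [MeasurableSpace Ω] {ν : Measure α} {ρ : Measure β} {κ : Measure γ} {μ : Measure Ω} [SFinite μ]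

lemma memLp_two_prod_iff {F : α × Ω → ℝ} (hF : AEStronglyMeasurable F (ν.prod μ)) :
    MemLp F 2 (ν.prod μ) ↔
      (∀ᵐ s ∂ν, MemLp (fun ω ↦ F (s, ω)) 2 μ) ∧ Integrable (fun s ↦ ∫ ω, F (s, ω) ^ 2 ∂μ) ν := by
  have hF_sq : AEStronglyMeasurable (fun q ↦ F q ^ 2) (ν.prod μ) := hF.pow 2
  rw [memLp_two_iff_integrable_sq hF, integrable_prod_iff hF_sq]
  simp only [norm_pow, Real.norm_eq_abs, sq_abs]
  refine and_congr_left fun _ ↦ Filter.eventually_congr ?_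
  filter_upwards [hF.prodMk_left] with s hs
  exact (memLp_two_iff_integrable_sq hs).symm

lemma memLp_comp_prodMap_id [SFinite κ] {E : Type*} [NormedAddCommGroup E]
    {p c : ℝ≥0∞} {F : α × Ω → E} (hF : MemLp F p (ν.prod μ)) {φ : γ → α} (hφ : Measurable φ)
    (hc : c ≠ ∞) (hmap : κ.map φ = c • ν) :
    MemLp (fun q : γ × Ω ↦ F (φ q.1, q.2)) p (κ.prod μ) := by
  have hmap_prod : (κ.prod μ).map (Prod.map φ id) = c • ν.prod μ := by
    rw [← Measure.map_prod_map κ μ hφ measurable_id, hmap, Measure.map_id,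
      Measure.prod_smul_left]
  have hF' : MemLp F p ((κ.prod μ).map (Prod.map φ id)) := hmap_prod ▸ hF.smul_measure hc
  exact (memLp_map_measure_iff hF'.1 (hφ.prodMap measurable_id).aemeasurable).1 hF'

variable [IsFiniteMeasure ν] [IsFiniteMeasure ρ] {F : α × Ω → ℝ} {G : β × Ω → ℝ}

lemma integrable_mul_of_memLp_two_prod (hF : MemLp F 2 (ν.prod μ)) (hG : MemLp G 2 (ρ.prod μ)) :
    Integrable (fun q : (α × β) × Ω ↦ F (q.1.1, q.2) * G (q.1.2, q.2))
      ((ν.prod ρ).prod μ) :=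
  (memLp_comp_prodMap_id hF measurable_fst (measure_ne_top ρ univ)
    Measure.map_fst_prod).integrable_mul
    (memLp_comp_prodMap_id hG measurable_snd (measure_ne_top ν univ) Measure.map_snd_prod)

lemma integral_integral_mul_integral (hF : MemLp F 2 (ν.prod μ)) (hG : MemLp G 2 (ρ.prod μ)) :
    ∫ ω, (∫ s, F (s, ω) ∂ν) * (∫ t, G (t, ω) ∂ρ) ∂μ =
      ∫ s, ∫ t, ∫ ω, F (s, ω) * G (t, ω) ∂μ ∂ρ ∂ν := by
  have hFG := integrable_mul_of_memLp_two_prod hF hG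
  calc ∫ ω, (∫ s, F (s, ω) ∂ν) * (∫ t, G (t, ω) ∂ρ) ∂μ
      = ∫ ω, ∫ p, F (p.1, ω) * G (p.2, ω) ∂(ν.prod ρ) ∂μ :=
        integral_congr_ae (.of_forall fun ω ↦
          (integral_prod_mul (fun s ↦ F (s, ω)) fun t ↦ G (t, ω)).symm)
    _ = ∫ p, ∫ ω, F (p.1, ω) * G (p.2, ω) ∂μ ∂(ν.prod ρ) := (integral_integral_swap hFG).symm
    _ = ∫ s, ∫ t, ∫ ω, F (s, ω) * G (t, ω) ∂μ ∂ρ ∂ν := integral_prod _ hFG.integral_prod_left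

lemma memLp_two_integral_prod (hF : MemLp F 2 (ν.prod μ)) :
    MemLp (fun ω ↦ ∫ s, F (s, ω) ∂ν) 2 μ := by
  refine (memLp_two_iff_integrable_sq hF.1.prod_swap.integral_prod_right').2 ?_
  refine (integrable_mul_of_memLp_two_prod hF hF).integral_prod_right.congr (.of_forall fun ω ↦ ?_)
  exact (integral_prod_mul (fun s ↦ F (s, ω)) fun s ↦ F (s, ω)).trans (sq _).symm

lemma ae_integrable_of_memLp_two_prod (hF : MemLp F 2 (ν.prod μ)) :
    ∀ᵐ ω ∂μ, Integrable (fun s ↦ F (s, ω)) ν := by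
  filter_upwards [hF.integrable_sq.prod_left_ae, hF.1.prod_swap.prodMk_left] with ω hsq hmeas
  exact ((memLp_two_iff_integrable_sq hmeas).2 hsq).integrable one_le_two

end SquareIntegrable

lemma integral_sum_sq_of_pairwise_orthogonal {ι Ω : Type*} [MeasurableSpace Ω] {μ : Measure Ω}
    {s : Finset ι} {f : ι → Ω → ℝ} (hf : ∀ i ∈ s, MemLp (f i) 2 μ)
    (horth : (s : Set ι).Pairwise fun i j ↦ ∫ ω, f i ω * f j ω ∂μ = 0) :
    ∫ ω, (∑ i ∈ s, f i ω) ^ 2 ∂μ = ∑ i ∈ s, ∫ ω, f i ω ^ 2 ∂μ := by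
  have hint : ∀ i ∈ s, ∀ j ∈ s, Integrable (fun ω ↦ f i ω * f j ω) μ :=
    fun i hi j hj ↦ (hf i hi).integrable_mul (hf j hj)
  simp_rw [sq, Finset.sum_mul_sum]
  rw [MeasureTheory.integral_finsetSum s fun i hi ↦ integrable_finsetSum s (hint i hi)]
  refine Finset.sum_congr rfl fun i hi ↦ ?_
  rw [MeasureTheory.integral_finsetSum s (hint i hi)]
  exact Finset.sum_eq_single_of_mem i hi fun j hj hji ↦ horth hi hj hji.symm

lemma integral_sub_max {l r s : ℝ} (hls : l ≤ s) (hsr : s ≤ r) :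
    ∫ t in l..r, (r - max s t) = ((r - l) ^ 2 - (s - l) ^ 2) / 2 := by
  have hcont : Continuous fun t ↦ r - max s t := by fun_prop
  have hleft : ∫ t in l..s, (r - max s t) = ∫ _ in l..s, (r - s) :=
    integral_congr fun t ht ↦ by rw [uIcc_of_le hls] at ht; simp only [max_eq_left ht.2]
  have hright : ∫ t in s..r, (r - max s t) = ∫ t in s..r, (r - t) :=
    integral_congr fun t ht ↦ by rw [uIcc_of_le hsr] at ht; simp only [max_eq_right ht.1]
  rw [← integral_add_adjacent_intervals (hcont.intervalIntegrable l s)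
    (hcont.intervalIntegrable s r), hleft, hright, intervalIntegral.integral_const,
    integral_comp_sub_left (fun t ↦ t) r, integral_id, smul_eq_mul]
  ring

lemma integral_integral_sub_max {l r : ℝ} (hlr : l ≤ r) :
    ∫ s in l..r, ∫ t in l..r, (r - max s t) = (r - l) ^ 3 / 3 := by
  calc ∫ s in l..r, ∫ t in l..r, (r - max s t)
      = ∫ s in l..r, ((r - l) ^ 2 - (s - l) ^ 2) / 2 :=
        integral_congr fun s hs ↦ by rw [uIcc_of_le hlr] at hs; exact integral_sub_max hs.1 hs.2
    _ = ∫ s in l - l..r - l, ((r - l) ^ 2 - s ^ 2) / 2 :=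
        integral_comp_sub_right (fun s ↦ ((r - l) ^ 2 - s ^ 2) / 2) l
    _ = (r - l) ^ 3 / 3 := by
        rw [intervalIntegral.integral_div, intervalIntegral.integral_sub (by simp) (by simp),
          intervalIntegral.integral_const, integral_pow, smul_eq_mul]
        ring

/-- `W` is a Brownian motion in the wide sense on the time set `T`: its increments between times
of `T` are square-integrable, orthogonal over non-overlapping intervals, and of second moment equal
to the elapsed time. Only increments are constrained, so `W` may start at any random value. -/
structure HasBrownianIncrements {Ω : Type*} [MeasurableSpace Ω] (W : ℝ → Ω → ℝ) (T : Set ℝ)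
    (μ : Measure Ω) : Prop where
  memLp_sub : ∀ ⦃s⦄, s ∈ T → ∀ ⦃t⦄, t ∈ T → MemLp (fun ω ↦ W t ω - W s ω) 2 μ
  integral_sub_sq : ∀ ⦃s⦄, s ∈ T → ∀ ⦃t⦄, t ∈ T → s ≤ t →
    ∫ ω, (W t ω - W s ω) ^ 2 ∂μ = t - s
  integral_sub_mul_sub : ∀ ⦃s⦄, s ∈ T → ∀ ⦃t⦄, t ∈ T → ∀ ⦃u⦄, u ∈ T → ∀ ⦃v⦄, v ∈ T →
    s ≤ t → t ≤ u → u ≤ v → ∫ ω, (W t ω - W s ω) * (W v ω - W u ω) ∂μ = 0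

/-- The error on the cell `[l, r]` of the right-endpoint rule, `∫ s in l..r, W s - (r - l) * W r`,
written as the integral of an increment. -/
noncomputable def rightEndpointError {Ω : Type*} (W : ℝ → Ω → ℝ) (l r : ℝ) (ω : Ω) : ℝ :=
  ∫ s in l..r, (W s ω - W r ω)

namespace HasBrownianIncrements

variable {Ω : Type*} [MeasurableSpace Ω] {μ : Measure Ω} {W : ℝ → Ω → ℝ} {T : Set ℝ}
  {l r l' r' : ℝ}

lemma of_integral_mul_eq_min (hL2 : ∀ t ∈ T, MemLp (W t) 2 μ)
    (hcov : ∀ s ∈ T, ∀ t ∈ T, ∫ ω, W s ω * W t ω ∂μ = min s t) :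
    HasBrownianIncrements W T μ := by
  have hint {s t} (hs : s ∈ T) (ht : t ∈ T) : Integrable (fun ω ↦ W s ω * W t ω) μ :=
    (hL2 s hs).integrable_mul (hL2 t ht)
  have hmul {s t u v} (hs : s ∈ T) (ht : t ∈ T) (hu : u ∈ T) (hv : v ∈ T) :
      ∫ ω, (W t ω - W s ω) * (W v ω - W u ω) ∂μ
        = min t v - min t u - (min s v - min s u) := by
    have hdiff {r} (hr : r ∈ T) : Integrable (fun ω ↦ W r ω * W v ω - W r ω * W u ω) μ :=
      (hint hr hv).sub (hint hr hu)
    simp_rw [sub_mul, mul_sub]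
    rw [MeasureTheory.integral_sub (hdiff ht) (hdiff hs),
      MeasureTheory.integral_sub (hint ht hv) (hint ht hu),
      MeasureTheory.integral_sub (hint hs hv) (hint hs hu),
      hcov t ht v hv, hcov t ht u hu, hcov s hs v hv, hcov s hs u hu]
  refine ⟨fun s hs t ht ↦ (hL2 t ht).sub (hL2 s hs), fun s hs t ht hst ↦ ?_,
    fun s hs t ht u hu v hv hst htu huv ↦ ?_⟩
  · simp_rw [sq]
    rw [hmul hs ht hs ht, min_self, min_self, min_eq_left hst, min_eq_right hst]
    ring
  · rw [hmul hs ht hu hv, min_eq_left htu, min_eq_left (htu.trans huv),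
      min_eq_left (hst.trans htu), min_eq_left (hst.trans (htu.trans huv))]
    ring

lemma integral_sub_right_mul_sub_right (hW : HasBrownianIncrements W T μ) {s t : ℝ} (hs : s ∈ T)
    (ht : t ∈ T) (hr : r ∈ T) (hsr : s ≤ r) (htr : t ≤ r) :
    ∫ ω, (W s ω - W r ω) * (W t ω - W r ω) ∂μ = r - max s t := by
  wlog hst : s ≤ t generalizing s t
  · simpa only [mul_comm, max_comm] using this ht hs htr hsr (le_of_not_ge hst)
  have hsplit (ω : Ω) : (W s ω - W r ω) * (W t ω - W r ω)
      = (W t ω - W s ω) * (W r ω - W t ω) + (W r ω - W t ω) ^ 2 := by ring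
  have hint : Integrable (fun ω ↦ (W t ω - W s ω) * (W r ω - W t ω)) μ :=
    (hW.memLp_sub hs ht).integrable_mul (hW.memLp_sub ht hr)
  simp_rw [hsplit]
  rw [MeasureTheory.integral_add hint (hW.memLp_sub ht hr).integrable_sq,
    hW.integral_sub_mul_sub hs ht ht hr hst le_rfl htr, hW.integral_sub_sq ht hr htr,
    max_eq_right hst, zero_add]

variable [SFinite μ]

lemma memLp_two_prod_sub_right (hW : HasBrownianIncrements W T μ)
    (hmeas : Measurable fun p : ℝ × Ω ↦ W p.1 p.2) (hT : Icc l r ⊆ T) :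
    MemLp (fun p : ℝ × Ω ↦ W p.1 p.2 - W r p.2) 2 ((volume.restrict (Ioc l r)).prod μ) := by
  have hmeas_sub : Measurable fun p : ℝ × Ω ↦ W p.1 p.2 - W r p.2 :=
    hmeas.sub (hmeas.comp (measurable_const.prodMk measurable_snd))
  have hr {s} (hs : s ∈ Ioc l r) : r ∈ T := hT ⟨hs.1.le.trans hs.2, le_rfl⟩
  refine (memLp_two_prod_iff hmeas_sub.aestronglyMeasurable).2 ⟨?_, ?_⟩
  · filter_upwards [ae_restrict_mem measurableSet_Ioc] with s hs
    exact hW.memLp_sub (hr hs) (hT (Ioc_subset_Icc_self hs))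
  · have hlength : IntegrableOn (fun s ↦ r - s) (Ioc l r) :=
      (by fun_prop : Continuous fun s ↦ r - s).integrableOn_Ioc
    refine hlength.congr_fun (fun s hs ↦ ?_) measurableSet_Ioc
    simp only [← hW.integral_sub_sq (hT (Ioc_subset_Icc_self hs)) (hr hs) hs.2, sub_sq_comm]

lemma memLp_rightEndpointError (hW : HasBrownianIncrements W T μ)
    (hmeas : Measurable fun p : ℝ × Ω ↦ W p.1 p.2) (hlr : l ≤ r) (hT : Icc l r ⊆ T) :
    MemLp (rightEndpointError W l r) 2 μ := by
  unfold rightEndpointError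
  simp_rw [integral_of_le hlr]
  exact memLp_two_integral_prod (hW.memLp_two_prod_sub_right hmeas hT)

lemma integral_rightEndpointError_mul (hW : HasBrownianIncrements W T μ)
    (hmeas : Measurable fun p : ℝ × Ω ↦ W p.1 p.2) (hlr : l ≤ r) (hT : Icc l r ⊆ T)
    (hlr' : l' ≤ r') (hT' : Icc l' r' ⊆ T) :
    ∫ ω, rightEndpointError W l r ω * rightEndpointError W l' r' ω ∂μ =
      ∫ s in l..r, ∫ t in l'..r', ∫ ω, (W s ω - W r ω) * (W t ω - W r' ω) ∂μ := by
  simp only [rightEndpointError, integral_of_le hlr, integral_of_le hlr']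
  exact integral_integral_mul_integral (hW.memLp_two_prod_sub_right hmeas hT)
    (hW.memLp_two_prod_sub_right hmeas hT')

lemma integral_rightEndpointError_sq (hW : HasBrownianIncrements W T μ)
    (hmeas : Measurable fun p : ℝ × Ω ↦ W p.1 p.2) (hlr : l ≤ r) (hT : Icc l r ⊆ T) :
    ∫ ω, rightEndpointError W l r ω ^ 2 ∂μ = (r - l) ^ 3 / 3 := by
  simp_rw [sq (rightEndpointError W l r _)]
  rw [hW.integral_rightEndpointError_mul hmeas hlr hT hlr hT, ← integral_integral_sub_max hlr]
  refine integral_congr fun s hs ↦ integral_congr fun t ht ↦ ?_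
  rw [uIcc_of_le hlr] at hs ht
  exact hW.integral_sub_right_mul_sub_right (hT hs) (hT ht) (hT (right_mem_Icc.2 hlr)) hs.2 ht.2

lemma integral_rightEndpointError_mul_eq_zero (hW : HasBrownianIncrements W T μ)
    (hmeas : Measurable fun p : ℝ × Ω ↦ W p.1 p.2) (hlr : l ≤ r) (hT : Icc l r ⊆ T)
    (hlr' : l' ≤ r') (hT' : Icc l' r' ⊆ T) (hrl' : r ≤ l') :
    ∫ ω, rightEndpointError W l r ω * rightEndpointError W l' r' ω ∂μ = 0 := by
  have horth : ∀ s ∈ uIcc l r, ∀ t ∈ uIcc l' r',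
      ∫ ω, (W s ω - W r ω) * (W t ω - W r' ω) ∂μ = 0 := by
    intro s hs t ht
    rw [uIcc_of_le hlr] at hs
    rw [uIcc_of_le hlr'] at ht
    rw [← hW.integral_sub_mul_sub (hT hs) (hT (right_mem_Icc.2 hlr)) (hT' ht)
      (hT' (right_mem_Icc.2 hlr')) hs.2 (hrl'.trans ht.1) ht.2]
    exact integral_congr_ae (.of_forall fun ω ↦ by ring)
  rw [hW.integral_rightEndpointError_mul hmeas hlr hT hlr' hT',
    integral_congr fun s hs ↦ integral_congr (horth s hs)]
  simp only [intervalIntegral.integral_zero]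

lemma ae_intervalIntegrable (hW : HasBrownianIncrements W T μ)
    (hmeas : Measurable fun p : ℝ × Ω ↦ W p.1 p.2) (hlr : l ≤ r) (hT : Icc l r ⊆ T) :
    ∀ᵐ ω ∂μ, IntervalIntegrable (fun s ↦ W s ω) volume l r := by
  filter_upwards [ae_integrable_of_memLp_two_prod (hW.memLp_two_prod_sub_right hmeas hT)]
    with ω hω
  have hsub : IntervalIntegrable (fun s ↦ W s ω - W r ω) volume l r :=
    (intervalIntegrable_iff_integrableOn_Ioc_of_le hlr).2 hω
  simpa only [sub_add_cancel] using hsub.add (intervalIntegrable_const (c := W r ω))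

lemma ae_sum_rightEndpointError (hmeas : Measurable fun p : ℝ × Ω ↦ W p.1 p.2) {x : ℕ → ℝ}
    (hx : Monotone x) (n : ℕ) (hW : HasBrownianIncrements W (Icc (x 0) (x n)) μ) :
    ∀ᵐ ω ∂μ, ∑ i ∈ Finset.range n, rightEndpointError W (x i) (x (i + 1)) ω =
      (∫ s in x 0..x n, W s ω)
        - ∑ i ∈ Finset.range n, (x (i + 1) - x i) * W (x (i + 1)) ω := by
  filter_upwards [hW.ae_intervalIntegrable hmeas (hx n.zero_le) subset_rfl] with ω hω
  have hcell : ∀ i < n, IntervalIntegrable (fun s ↦ W s ω) volume (x i) (x (i + 1)) := by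
    intro i hi
    refine hω.mono_set ?_
    rw [uIcc_of_le (hx i.le_succ), uIcc_of_le (hx n.zero_le)]
    exact Icc_subset_Icc (hx i.zero_le) (hx hi)
  rw [← sum_integral_adjacent_intervals hcell, ← Finset.sum_sub_distrib]
  refine Finset.sum_congr rfl fun i hi ↦ ?_
  rw [rightEndpointError, intervalIntegral.integral_sub (hcell i (Finset.mem_range.1 hi))
    intervalIntegrable_const, intervalIntegral.integral_const, smul_eq_mul]

theorem integral_sq_integral_sub_riemannSum (hmeas : Measurable fun p : ℝ × Ω ↦ W p.1 p.2)
    {x : ℕ → ℝ} (hx : Monotone x) (n : ℕ)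
    (hW : HasBrownianIncrements W (Icc (x 0) (x n)) μ) :
    ∫ ω, ((∫ s in x 0..x n, W s ω)
        - ∑ i ∈ Finset.range n, (x (i + 1) - x i) * W (x (i + 1)) ω) ^ 2 ∂μ
      = ∑ i ∈ Finset.range n, (x (i + 1) - x i) ^ 3 / 3 := by
  have hcell {i} (hi : i ∈ Finset.range n) : Icc (x i) (x (i + 1)) ⊆ Icc (x 0) (x n) :=
    Icc_subset_Icc (hx i.zero_le) (hx (Finset.mem_range.1 hi))
  have horth : (Finset.range n : Set ℕ).Pairwise fun i j ↦
      ∫ ω, rightEndpointError W (x i) (x (i + 1)) ω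
        * rightEndpointError W (x j) (x (j + 1)) ω ∂μ = 0 := by
    intro i hi j hj hij
    wlog hlt : i < j generalizing i j
    · simpa only [mul_comm] using this hj hi hij.symm (hij.lt_or_gt.resolve_left hlt)
    exact hW.integral_rightEndpointError_mul_eq_zero hmeas (hx i.le_succ) (hcell hi)
      (hx j.le_succ) (hcell hj) (hx hlt)
  calc _ = ∫ ω, (∑ i ∈ Finset.range n, rightEndpointError W (x i) (x (i + 1)) ω) ^ 2 ∂μ := by
        refine integral_congr_ae ?_
        filter_upwards [ae_sum_rightEndpointError hmeas hx n hW] with ω hω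
        rw [hω]
    _ = ∑ i ∈ Finset.range n, ∫ ω, rightEndpointError W (x i) (x (i + 1)) ω ^ 2 ∂μ :=
        integral_sum_sq_of_pairwise_orthogonal
          (fun i hi ↦ hW.memLp_rightEndpointError hmeas (hx i.le_succ) (hcell hi)) horth
    _ = ∑ i ∈ Finset.range n, (x (i + 1) - x i) ^ 3 / 3 :=
        Finset.sum_congr rfl fun i hi ↦
          hW.integral_rightEndpointError_sq hmeas (hx i.le_succ) (hcell hi)

theorem integral_sq_average_sub_riemannSum {a h τ : ℝ} {M : ℕ}
    (hmeas : Measurable fun p : ℝ × Ω ↦ W p.1 p.2)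
    (hW : HasBrownianIncrements W (Icc a (a + τ)) μ) (hh : 0 < h) (hM : 0 < M)
    (hτ : τ = M * h) :
    ∫ ω, ((1 / τ) * (∫ s in a..(a + τ), W s ω)
        - (1 / (M : ℝ)) * ∑ ℓ ∈ Finset.range M, W (a + (ℓ + 1 : ℕ) * h) ω) ^ 2 ∂μ
      = h ^ 2 / (3 * τ) := by
  have hmono : Monotone fun i : ℕ ↦ a + i * h := fun i j hij ↦ by dsimp only; gcongr
  have hstep (i : ℕ) : a + ((i + 1 : ℕ) : ℝ) * h - (a + i * h) = h := by push_cast; ring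
  have hzero : a + ((0 : ℕ) : ℝ) * h = a := by simp
  have hmesh := integral_sq_integral_sub_riemannSum hmeas hmono M (by rwa [hzero, ← hτ])
  simp only [hstep, hzero, ← hτ, ← Finset.mul_sum, Finset.sum_const, Finset.card_range,
    nsmul_eq_mul] at hmesh
  have hscale (I S : ℝ) : ((1 / τ) * I - (1 / (M : ℝ)) * S) ^ 2
      = (1 / τ) ^ 2 * (I - h * S) ^ 2 := by
    rw [hτ]; field_simp
  simp_rw [hscale]
  rw [MeasureTheory.integral_const_mul, hmesh, hτ]
  field_simp

end HasBrownianIncrements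

theorem brownian_average_riemann_sum_error_general
    {Ω : Type*} [MeasurableSpace Ω] (μ : Measure Ω) [SFinite μ] (W : ℝ → Ω → ℝ)
    (hmeas : Measurable fun p : ℝ × Ω ↦ W p.1 p.2) (a h τ : ℝ) (M : ℕ)
    (hW : HasBrownianIncrements W (Icc a (a + τ)) μ) (hh : 0 < h) (hM : 0 < M)
    (hτ : τ = M * h) :
    (∫ ω, ((1 / τ) * (∫ s in a..(a + τ), W s ω)
        - (1 / (M : ℝ)) * ∑ ℓ ∈ Finset.range M, W (a + (ℓ + 1 : ℕ) * h) ω) ^ 2 ∂μ)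
      = h ^ 2 / (3 * τ)
    ∧ (h = τ ^ 2 →
        (∫ ω, ((1 / τ) * (∫ s in a..(a + τ), W s ω)
            - (1 / (M : ℝ)) * ∑ ℓ ∈ Finset.range M, W (a + (ℓ + 1 : ℕ) * h) ω) ^ 2 ∂μ)
          = τ ^ 3 / 3
        ∧ (∫ ω, ((1 / τ) * (∫ s in a..(a + τ), W s ω)
            - (1 / (M : ℝ)) * ∑ ℓ ∈ Finset.range M, W (a + (ℓ + 1 : ℕ) * h) ω) ^ 2 ∂μ)
          ≤ τ ^ 3) := by
  have hτ_pos : 0 < τ := by rw [hτ]; positivity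
  rw [hW.integral_sq_average_sub_riemannSum hmeas hh hM hτ]
  refine ⟨rfl, fun h_eq ↦ ?_⟩
  have hcube : h ^ 2 / (3 * τ) = τ ^ 3 / 3 := by rw [h_eq]; field_simp
  exact ⟨hcube, hcube.trans_le (div_le_self (by positivity) (by norm_num))⟩

/-- Mean-square error between the time average of a Brownian-covariance process
over `[a, a+τ]` and its right-endpoint Riemann sum on the fine mesh of step `h`
(with `τ = M h`): the error equals `h²/(3τ)`; in particular for `h = τ²` it
equals `τ³/3` and hence is at most `τ³`. -/
theorem brownian_average_riemann_sum_error
    {Ω : Type*} [MeasurableSpace Ω] (ℙ : Measure Ω) [IsProbabilityMeasure ℙ]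
    (W : ℝ → Ω → ℝ)
    (hmeas : Measurable fun p : ℝ × Ω => W p.1 p.2)
    (hsq : ∀ t : ℝ, 0 ≤ t → Integrable (fun ω => (W t ω) ^ 2) ℙ)
    (hmean : ∀ t : ℝ, 0 ≤ t → ∫ ω, W t ω ∂ℙ = 0)
    (hcov : ∀ s t : ℝ, 0 ≤ s → 0 ≤ t → ∫ ω, W s ω * W t ω ∂ℙ = min s t)
    (a h τ : ℝ) (M : ℕ) (ha : 0 ≤ a) (hh : 0 < h) (hM : 0 < M)
    (hτ : τ = M * h) :
    (∫ ω, ((1 / τ) * (∫ s in a..(a + τ), W s ω)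
        - (1 / (M : ℝ)) * ∑ ℓ ∈ Finset.range M, W (a + (ℓ + 1 : ℕ) * h) ω) ^ 2 ∂ℙ)
      = h ^ 2 / (3 * τ)
    ∧ (h = τ ^ 2 →
        (∫ ω, ((1 / τ) * (∫ s in a..(a + τ), W s ω)
            - (1 / (M : ℝ)) * ∑ ℓ ∈ Finset.range M, W (a + (ℓ + 1 : ℕ) * h) ω) ^ 2 ∂ℙ)
          = τ ^ 3 / 3
        ∧ (∫ ω, ((1 / τ) * (∫ s in a..(a + τ), W s ω)
            - (1 / (M : ℝ)) * ∑ ℓ ∈ Finset.range M, W (a + (ℓ + 1 : ℕ) * h) ω) ^ 2 ∂ℙ)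
          ≤ τ ^ 3) := by
  have hL2 (t : ℝ) (ht : 0 ≤ t) : MemLp (W t) 2 ℙ :=
    (memLp_two_iff_integrable_sq hmeas.of_uncurry_left.aestronglyMeasurable).2 (hsq t ht)
  have hW : HasBrownianIncrements W (Icc a (a + τ)) ℙ :=
    .of_integral_mul_eq_min (fun t ht ↦ hL2 t (ha.trans ht.1)) fun s hs t ht ↦
      hcov s t (ha.trans hs.1) (ha.trans ht.1)
  exact brownian_average_riemann_sum_error_general ℙ W hmeas a h τ M hW hh hM hτ
end

section
/- Let (Ω, 𝔉, ℙ) be a probability space, let E, G be real normed spaces, let B : E × E → G be a bilinear map with ‖B(u, v)‖ ≤ ‖u‖·‖v‖ for all u, v ∈ E, let τ > 0, C ≥ 0, and let Z : [0, τ] × Ω → E be a jointly strongly measurable process with 𝔼‖Z(t)‖⁴ < ∞ for each t and satisfying the fourth-moment increment bound 𝔼[ ‖Z(t) - Z(s)‖⁴ ] ≤ C²·|t - s|² for all s, t ∈ [0, τ]. Define F(t, s, r) := B(Z(t) - Z(s), Z(t) - Z(r)). Then there is an absolute constant K > 0 (for instance K = 12) such that for all (t, s, r), (t', s', r') ∈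 [0, τ]³, 𝔼[ ‖F(t, s, r) - F(t', s', r')‖² ] ≤ K·C²·τ·( |t - t'| + |s - s'| + |r - r'| ). -/
open MeasureTheory Set

universe u v w

/-! Both terms of `B u v - B u' v' = B (u - u') v + B u' (v - v')` pair increments between nearby
times with an increment over at most the whole time interval. Hölder's inequality bounds such a
product in `L²` by the `L⁴` norms of its factors, and the fourth-moment hypothesis says that an
increment over a time `h` has `L⁴` norm at most a constant times `√h`. The `L²` distance of the
integrands is thus at most a constant times `√τ (2 √|t - t'| + √|s - s'| + √|r - r'|)`, and
Cauchy-Schwarz with the weights `(2, 1, 1)` gives the factor `2² + 1² + 1² = 6`. -/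

open scoped ENNReal

section LpNorm

variable {Ω E : Type*} [MeasurableSpace Ω] {μ : Measure Ω} [NormedAddCommGroup E] {f : Ω → E}

lemma lpNorm_natCast_pow_eq_integral {n : ℕ} (hn : n ≠ 0) (hf : AEStronglyMeasurable f μ) :
    lpNorm f n μ ^ n = ∫ ω, ‖f ω‖ ^ n ∂μ := by
  have h_nonneg : 0 ≤ ∫ ω, ‖f ω‖ ^ n ∂μ := by positivity
  simp [lpNorm_eq_integral_norm_rpow_toReal (Nat.cast_ne_zero.2 hn) (ENNReal.natCast_ne_top n) hf,
    Real.rpow_inv_natCast_pow h_nonneg hn]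

lemma memLp_natCast_of_integrable_norm_pow {n : ℕ} (hn : n ≠ 0) (hf : AEStronglyMeasurable f μ)
    (hint : Integrable (fun ω => ‖f ω‖ ^ n) μ) : MemLp f n μ := by
  rw [← integrable_norm_rpow_iff hf (Nat.cast_ne_zero.2 hn) (ENNReal.natCast_ne_top n)]
  simpa using hint

lemma lpNorm_four_le_sqrt_mul_sqrt {C h : ℝ} (hC : 0 ≤ C) (hh : 0 ≤ h)
    (hf : AEStronglyMeasurable f μ) (hmom : ∫ ω, ‖f ω‖ ^ 4 ∂μ ≤ C ^ 2 * h ^ 2) :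
    lpNorm f 4 μ ≤ √C * √h := by
  refine le_of_pow_le_pow_left₀ four_ne_zero (by positivity) ?_
  calc lpNorm f 4 μ ^ 4
    _ = ∫ ω, ‖f ω‖ ^ 4 ∂μ := by
      exact_mod_cast lpNorm_natCast_pow_eq_integral four_ne_zero hf
    _ ≤ C ^ 2 * h ^ 2 := hmom
    _ = ((√C) ^ 2) ^ 2 * ((√h) ^ 2) ^ 2 := by rw [Real.sq_sqrt hC, Real.sq_sqrt hh]
    _ = (√C * √h) ^ 4 := by ring

end LpNorm

instance holderTriple_four_four_two : ENNReal.HolderTriple 4 4 2 where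
  inv_add_inv_eq_inv := by
    rw [← two_mul, show (4 : ℝ≥0∞) = 2 * 2 by norm_num, ENNReal.mul_inv (by simp) (by simp),
      ← mul_assoc, ENNReal.mul_inv_cancel (by simp) (by simp), one_mul]

section Bilinear

variable {Ω 𝕜 E F G : Type*} [MeasurableSpace Ω] {μ : Measure Ω} [NontriviallyNormedField 𝕜]
  [NormedAddCommGroup E] [NormedSpace 𝕜 E] [NormedAddCommGroup F] [NormedSpace 𝕜 F]
  [NormedAddCommGroup G] [NormedSpace 𝕜 G] (B : E →L[𝕜] F →L[𝕜] G)
  {p q r : ℝ≥0∞} [ENNReal.HolderTriple p q r]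
  {f f' : Ω → E} {g g' : Ω → F}

lemma lpNorm_bilin_le (hf : MemLp f p μ) (hg : MemLp g q μ) :
    lpNorm (fun ω => B (f ω) (g ω)) r μ ≤ ‖B‖ * lpNorm f p μ * lpNorm g q μ := by
  have holder := eLpNorm_le_eLpNorm_mul_eLpNorm_of_nnnorm (p := p) (q := q) (r := r) hf.1 hg.1
    (fun x y => B x y) ‖B‖₊ (.of_forall fun _ => B.le_opNorm₂ _ _)
  rw [← toReal_eLpNorm (B.memLp_of_bilin r hf hg).1, ← toReal_eLpNorm hf.1, ← toReal_eLpNorm hg.1]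
  simpa using ENNReal.toReal_mono
    (ENNReal.mul_ne_top (ENNReal.mul_ne_top ENNReal.coe_ne_top hf.2.ne) hg.2.ne) holder

lemma lpNorm_bilin_sub_bilin_le (hr : 1 ≤ r) (hf : MemLp f p μ) (hf' : MemLp f' p μ)
    (hg : MemLp g q μ) (hg' : MemLp g' q μ) :
    lpNorm (fun ω => B (f ω) (g ω) - B (f' ω) (g' ω)) r μ ≤
      ‖B‖ * (lpNorm (f - f') p μ * lpNorm g q μ + lpNorm f' p μ * lpNorm (g - g') q μ) := by
  have split : (fun ω => B (f ω) (g ω) - B (f' ω) (g' ω)) =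
      (fun ω => B ((f - f') ω) (g ω)) + fun ω => B (f' ω) ((g - g') ω) := by
    ext ω
    simp
  calc lpNorm (fun ω => B (f ω) (g ω) - B (f' ω) (g' ω)) r μ
    _ ≤ lpNorm (fun ω => B ((f - f') ω) (g ω)) r μ +
        lpNorm (fun ω => B (f' ω) ((g - g') ω)) r μ :=
      split ▸ lpNorm_add_le (B.memLp_of_bilin r (hf.sub hf') hg) hr
    _ ≤ ‖B‖ * lpNorm (f - f') p μ * lpNorm g q μ + ‖B‖ * lpNorm f' p μ * lpNorm (g - g') q μ :=
      add_le_add (lpNorm_bilin_le B (hf.sub hf') hg) (lpNorm_bilin_le B hf' (hg.sub hg'))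
    _ = ‖B‖ * (lpNorm (f - f') p μ * lpNorm g q μ + lpNorm f' p μ * lpNorm (g - g') q μ) := by
      ring

end Bilinear

section Increments

variable {T Ω E : Type*} [MeasurableSpace Ω] {μ : Measure Ω} [NormedAddCommGroup E]
  {X : T → Ω → E} {p : ℝ≥0∞}

lemma lpNorm_increment_sub_increment_le (hp : 1 ≤ p) {t s t' s' : T} (hX : MemLp (X t - X t') p μ) :
    lpNorm ((X t - X s) - (X t' - X s')) p μ ≤
      lpNorm (X t - X t') p μ + lpNorm (X s - X s') p μ := by
  rw [sub_sub_sub_comm]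
  exact lpNorm_sub_le hX hp

end Increments

/-- The integrand `F(t, s, r) = B(X(t) - X(s), Y(t) - Y(r))` of the triple integral, as a random
variable. The paper's `F` is the diagonal case `X = Y = Z`. -/
def tripleIntegrand {T Ω 𝕜 E F G : Type*} [NontriviallyNormedField 𝕜]
    [NormedAddCommGroup E] [NormedSpace 𝕜 E] [NormedAddCommGroup F] [NormedSpace 𝕜 F]
    [NormedAddCommGroup G] [NormedSpace 𝕜 G] (B : E →L[𝕜] F →L[𝕜] G)
    (X : T → Ω → E) (Y : T → Ω → F) (t s r : T) (ω : Ω) : G :=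
  B ((X t - X s) ω) ((Y t - Y r) ω)

namespace tripleIntegrand

variable {T Ω 𝕜 E F G : Type*} [MeasurableSpace Ω] {μ : Measure Ω} [NontriviallyNormedField 𝕜]
  [NormedAddCommGroup E] [NormedSpace 𝕜 E] [NormedAddCommGroup F] [NormedSpace 𝕜 F]
  [NormedAddCommGroup G] [NormedSpace 𝕜 G] (B : E →L[𝕜] F →L[𝕜] G)
  {X : T → Ω → E} {Y : T → Ω → F} {p q ρ : ℝ≥0∞} [ENNReal.HolderTriple p q ρ]

lemma memLp (hX : ∀ s t, MemLp (X t - X s) p μ) (hY : ∀ s t, MemLp (Y t - Y s) q μ) (t s r : T) :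
    MemLp (tripleIntegrand B X Y t s r) ρ μ :=
  B.memLp_of_bilin ρ (hX s t) (hY r t)

lemma lpNorm_sub_le [PseudoMetricSpace T] {τ a b : ℝ} (hρ : 1 ≤ ρ)
    (hτ : ∀ s t : T, dist t s ≤ τ) (ha : 0 ≤ a) (hb : 0 ≤ b)
    (hX : ∀ s t, MemLp (X t - X s) p μ) (hY : ∀ s t, MemLp (Y t - Y s) q μ)
    (hXa : ∀ s t, lpNorm (X t - X s) p μ ≤ a * √(dist t s))
    (hYb : ∀ s t, lpNorm (Y t - Y s) q μ ≤ b * √(dist t s)) (t s r t' s' r' : T) :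
    lpNorm (tripleIntegrand B X Y t s r - tripleIntegrand B X Y t' s' r') ρ μ ≤
      ‖B‖ * (a * b * √τ * (2 * √(dist t t') + √(dist s s') + √(dist r r'))) := by
  have hp : 1 ≤ p := hρ.trans (ENNReal.HolderTriple.le p q ρ)
  have hq : 1 ≤ q := hρ.trans (ENNReal.HolderTriple.le q p ρ)
  have hX_short : lpNorm ((X t - X s) - (X t' - X s')) p μ ≤
      a * √(dist t t') + a * √(dist s s') :=
    (lpNorm_increment_sub_increment_le hp (hX t' t)).trans (add_le_add (hXa _ _) (hXa _ _))
  have hY_short : lpNorm ((Y t - Y r) - (Y t' - Y r')) q μ ≤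
      b * √(dist t t') + b * √(dist r r') :=
    (lpNorm_increment_sub_increment_le hq (hY t' t)).trans (add_le_add (hYb _ _) (hYb _ _))
  have hX_long : lpNorm (X t' - X s') p μ ≤ a * √τ := (hXa _ _).trans (by gcongr; exact hτ _ _)
  have hY_long : lpNorm (Y t - Y r) q μ ≤ b * √τ := (hYb _ _).trans (by gcongr; exact hτ _ _)
  calc lpNorm (tripleIntegrand B X Y t s r - tripleIntegrand B X Y t' s' r') ρ μ
    _ ≤ ‖B‖ * (lpNorm ((X t - X s) - (X t' - X s')) p μ * lpNorm (Y t - Y r) q μ +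
          lpNorm (X t' - X s') p μ * lpNorm ((Y t - Y r) - (Y t' - Y r')) q μ) :=
      lpNorm_bilin_sub_bilin_le B hρ (hX s t) (hX s' t') (hY r t) (hY r' t')
    _ ≤ ‖B‖ * ((a * √(dist t t') + a * √(dist s s')) * (b * √τ) +
          (a * √τ) * (b * √(dist t t') + b * √(dist r r'))) := by
      gcongr <;> exact lpNorm_nonneg
    _ = ‖B‖ * (a * b * √τ * (2 * √(dist t t') + √(dist s s') + √(dist r r'))) := by ring

end tripleIntegrand

lemma sq_two_mul_sqrt_add_sqrt_add_sqrt_le {x y z : ℝ} (hx : 0 ≤ x) (hy : 0 ≤ y) (hz : 0 ≤ z) :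
    (2 * √x + √y + √z) ^ 2 ≤ 6 * (x + y + z) := by
  have weighted : (2 * √x + √y + √z) ^ 2 ≤ 6 * (√x ^ 2 + √y ^ 2 + √z ^ 2) := by
    linarith [sq_nonneg (√x - 2 * √y), sq_nonneg (√x - 2 * √z), sq_nonneg (√y - √z)]
  rwa [Real.sq_sqrt hx, Real.sq_sqrt hy, Real.sq_sqrt hz] at weighted

theorem triple_integrand_mean_square_modulus_general {T Ω 𝕜 E F G : Type*} [PseudoMetricSpace T]
    [MeasurableSpace Ω] {μ : Measure Ω} [NontriviallyNormedField 𝕜]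
    [NormedAddCommGroup E] [NormedSpace 𝕜 E] [NormedAddCommGroup F] [NormedSpace 𝕜 F]
    [NormedAddCommGroup G] [NormedSpace 𝕜 G]
    (B : E →ₗ[𝕜] F →ₗ[𝕜] G) (hB : ∀ u v, ‖B u v‖ ≤ ‖u‖ * ‖v‖)
    {τ C D : ℝ} (hτ : ∀ s t : T, dist t s ≤ τ) (hC : 0 ≤ C) (hD : 0 ≤ D)
    {X : T → Ω → E} {Y : T → Ω → F}
    (hX : ∀ s t, MemLp (X t - X s) 4 μ) (hY : ∀ s t, MemLp (Y t - Y s) 4 μ)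
    (hXC : ∀ s t, ∫ ω, ‖X t ω - X s ω‖ ^ 4 ∂μ ≤ C ^ 2 * dist t s ^ 2)
    (hYD : ∀ s t, ∫ ω, ‖Y t ω - Y s ω‖ ^ 4 ∂μ ≤ D ^ 2 * dist t s ^ 2) (t s r t' s' r' : T) :
    ∫ ω, ‖B (X t ω - X s ω) (Y t ω - Y r ω) - B (X t' ω - X s' ω) (Y t' ω - Y r' ω)‖ ^ 2 ∂μ ≤
      6 * (C * D) * τ * (dist t t' + dist s s' + dist r r') := by
  let A : E →L[𝕜] F →L[𝕜] G := B.mkContinuous₂ 1 (by simpa using hB)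
  have hA : ‖A‖ ≤ 1 := B.mkContinuous₂_norm_le zero_le_one _
  have hτ_nonneg : 0 ≤ τ := dist_nonneg.trans (hτ t t)
  let Δ := tripleIntegrand A X Y t s r - tripleIntegrand A X Y t' s' r'
  have hΔ : MemLp Δ 2 μ :=
    (tripleIntegrand.memLp A hX hY t s r).sub (tripleIntegrand.memLp A hX hY t' s' r')
  have norm_Δ : lpNorm Δ 2 μ ≤
      ‖A‖ * (√C * √D * √τ * (2 * √(dist t t') + √(dist s s') + √(dist r r'))) :=
    tripleIntegrand.lpNorm_sub_le A one_le_two hτ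
      (Real.sqrt_nonneg C) (Real.sqrt_nonneg D) hX hY
      (fun s t => lpNorm_four_le_sqrt_mul_sqrt hC dist_nonneg (hX s t).1 (hXC s t))
      (fun s t => lpNorm_four_le_sqrt_mul_sqrt hD dist_nonneg (hY s t).1 (hYD s t)) t s r t' s' r'
  calc ∫ ω, ‖Δ ω‖ ^ 2 ∂μ
    _ = lpNorm Δ 2 μ ^ 2 := by
      exact_mod_cast (lpNorm_natCast_pow_eq_integral two_ne_zero hΔ.1).symm
    _ ≤ (1 * (√C * √D * √τ * (2 * √(dist t t') + √(dist s s') + √(dist r r')))) ^ 2 := by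
      gcongr
      · exact lpNorm_nonneg
      · exact norm_Δ.trans (by gcongr)
    _ = C * D * τ * (2 * √(dist t t') + √(dist s s') + √(dist r r')) ^ 2 := by
      simp only [one_mul, mul_pow, Real.sq_sqrt, hC, hD, hτ_nonneg]
    _ ≤ C * D * τ * (6 * (dist t t' + dist s s' + dist r r')) := by
      gcongr
      exact sq_two_mul_sqrt_add_sqrt_add_sqrt_le dist_nonneg dist_nonneg dist_nonneg
    _ = 6 * (C * D) * τ * (dist t t' + dist s s' + dist r r') := by ring

/-- Mean-square modulus of continuity of the triple-integrand
`F(t,s,r) = B(Z(t)-Z(s), Z(t)-Z(r))`: there is an absolute constant `K > 0`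
such that for any process `Z` with fourth-moment increment bound
`𝔼‖Z(t)-Z(s)‖⁴ ≤ C²|t-s|²` on `[0,τ]`,
`𝔼‖F(t,s,r) - F(t',s',r')‖² ≤ K C² τ (|t-t'| + |s-s'| + |r-r'|)`. -/
theorem triple_integrand_mean_square_modulus :
    ∃ K : ℝ, 0 < K ∧
      ∀ (Ω : Type u) [MeasurableSpace Ω] (ℙ : Measure Ω) [IsProbabilityMeasure ℙ]
        (E : Type v) (G : Type w)
        [NormedAddCommGroup E] [NormedSpace ℝ E]
        [NormedAddCommGroup G] [NormedSpace ℝ G]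
        (B : E →ₗ[ℝ] E →ₗ[ℝ] G), (∀ u v, ‖B u v‖ ≤ ‖u‖ * ‖v‖) →
      ∀ (τ C : ℝ), 0 < τ → 0 ≤ C →
      ∀ (Z : ℝ → Ω → E),
        StronglyMeasurable (fun p : ℝ × Ω => Z p.1 p.2) →
        (∀ t ∈ Icc (0 : ℝ) τ, Integrable (fun ω => ‖Z t ω‖ ^ 4) ℙ) →
        (∀ s ∈ Icc (0 : ℝ) τ, ∀ t ∈ Icc (0 : ℝ) τ,
          ∫ ω, ‖Z t ω - Z s ω‖ ^ 4 ∂ℙ ≤ C ^ 2 * |t - s| ^ 2) →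
      ∀ t s r t' s' r' : ℝ, t ∈ Icc (0 : ℝ) τ → s ∈ Icc (0 : ℝ) τ →
        r ∈ Icc (0 : ℝ) τ → t' ∈ Icc (0 : ℝ) τ → s' ∈ Icc (0 : ℝ) τ →
        r' ∈ Icc (0 : ℝ) τ →
        ∫ ω, ‖B (Z t ω - Z s ω) (Z t ω - Z r ω)
              - B (Z t' ω - Z s' ω) (Z t' ω - Z r' ω)‖ ^ 2 ∂ℙ
          ≤ K * C ^ 2 * τ * (|t - t'| + |s - s'| + |r - r'|) := by
  refine ⟨6, by norm_num, fun Ω _ ℙ _ E G _ _ _ _ B hB τ C _ hC Z hZ hint hinc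
    t s r t' s' r' ht hs hr ht' hs' hr' => ?_⟩
  have hZ_memLp (t : Icc 0 τ) : MemLp (Z t) 4 ℙ := by
    exact_mod_cast memLp_natCast_of_integrable_norm_pow four_ne_zero
      (hZ.comp_measurable measurable_prodMk_left).aestronglyMeasurable (hint t t.2)
  have hZ_incr (s t : Icc 0 τ) : MemLp (Z t - Z s) 4 ℙ := (hZ_memLp t).sub (hZ_memLp s)
  have h_diam (s t : Icc 0 τ) : dist t s ≤ τ := by
    simpa [Subtype.dist_eq] using Real.dist_le_of_mem_Icc t.2 s.2
  have hZ_moment (s t : Icc 0 τ) : ∫ ω, ‖Z t ω - Z s ω‖ ^ 4 ∂ℙ ≤ C ^ 2 * dist t s ^ 2 :=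
    hinc s s.2 t t.2
  rw [sq C]
  exact triple_integrand_mean_square_modulus_general B hB h_diam hC hC hZ_incr hZ_incr hZ_moment
    hZ_moment ⟨t, ht⟩ ⟨s, hs⟩ ⟨r, hr⟩ ⟨t', ht'⟩ ⟨s', hs'⟩ ⟨r', hr'⟩
end

section
/- Let (Ω, 𝔉, ℙ) be a probability space, G a real Banach space, A ≥ 0, h > 0, and let F : [0, ∞)³ × Ω → G be a jointly strongly measurable map, square-integrable in ω for each (t,s,r), satisfying 𝔼[ ‖F(t, s, r) - F(t', s', r')‖² ] ≤ A·( |t - t'| + |s - s'| + |r - r'| ) for all arguments in a cube R = [t₁ - h, t₁] × [t₂ - h, t₂] × [t₃ - h, t₃]. Then the local quadrature error on R against the corner value satisfies 𝔼[ ‖ ∫_R ( F(t, s, r) - F(t₁, t₂, t₃) ) ds dt dr ‖² ] ≤ 3·A·h⁷. -/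
open MeasureTheory Set intervalIntegral

/-!
For each `ω`, Jensen's inequality bounds the squared norm of the integral over the box `R` by `|R|`
times the integral over `R` of the squared norm of the increment from the corner. After exchanging
the expectation with the integral over `R` (Tonelli), the mean square of each increment is at most
`A * (h + h + h)` by the modulus of continuity. The factor `|R| = h ^ 3` enters twice, once from
Jensen and once from the integral over `R`, and the total is `3 * A * h ^ 7`.
-/

section Jensen

variable {α Ω : Type*} [MeasurableSpace α] [MeasurableSpace Ω]

theorem rpow_lintegral_le_measure_univ_rpow_mul (μ : Measure α) {p : ℝ} (hp : 1 ≤ p)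
    {f : α → ENNReal} (hf : AEMeasurable f μ) :
    (∫⁻ a, f a ∂μ) ^ p ≤ μ univ ^ (p - 1) * ∫⁻ a, f a ^ p ∂μ := by
  have hp0 : 0 < p := zero_lt_one.trans_le hp
  have holder := eLpNorm'_le_eLpNorm'_mul_rpow_measure_univ zero_lt_one hp hf.aestronglyMeasurable
  simp only [eLpNorm'_eq_lintegral_enorm, enorm_eq_self, ENNReal.rpow_one, div_one] at holder
  calc (∫⁻ a, f a ∂μ) ^ p
      ≤ ((∫⁻ a, f a ^ p ∂μ) ^ (1 / p) * μ univ ^ (1 - 1 / p)) ^ p := by gcongr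
    _ = μ univ ^ (p - 1) * ∫⁻ a, f a ^ p ∂μ := by
      rw [ENNReal.mul_rpow_of_nonneg _ _ hp0.le, ← ENNReal.rpow_mul, ← ENNReal.rpow_mul,
        one_div_mul_cancel hp0.ne', ENNReal.rpow_one, sub_mul, one_mul,
        one_div_mul_cancel hp0.ne', mul_comm]

theorem lintegral_rpow_lintegral_le_of_ae_le {P : Measure Ω} [SFinite P]
    {μ : Measure α} [SFinite μ] {p : ℝ} (hp : 1 ≤ p) {f : Ω × α → ENNReal}
    (hf : AEMeasurable f (P.prod μ)) {C : ENNReal}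
    (hC : ∀ᵐ a ∂μ, ∫⁻ ω, f (ω, a) ^ p ∂P ≤ C) :
    ∫⁻ ω, (∫⁻ a, f (ω, a) ∂μ) ^ p ∂P ≤ C * μ univ ^ p := by
  have hfp : AEMeasurable (fun z => f z ^ p) (P.prod μ) := hf.pow_const p
  calc ∫⁻ ω, (∫⁻ a, f (ω, a) ∂μ) ^ p ∂P
      ≤ ∫⁻ ω, μ univ ^ (p - 1) * ∫⁻ a, f (ω, a) ^ p ∂μ ∂P := by
        refine lintegral_mono_ae ?_
        filter_upwards [hf.aestronglyMeasurable.prodMk_left] with ω hω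
        exact rpow_lintegral_le_measure_univ_rpow_mul μ hp hω.aemeasurable
    _ = μ univ ^ (p - 1) * ∫⁻ a, ∫⁻ ω, f (ω, a) ^ p ∂P ∂μ := by
        rw [lintegral_const_mul'' _ hfp.lintegral_prod_right', lintegral_lintegral_swap hfp]
    _ ≤ μ univ ^ (p - 1) * (C * μ univ) := by
        gcongr
        exact (lintegral_mono_ae hC).trans_eq (lintegral_const C)
    _ = C * μ univ ^ p := by
        nth_rw 2 [← ENNReal.rpow_one (μ univ)]
        rw [mul_left_comm, ← ENNReal.rpow_add_of_nonneg _ _ (sub_nonneg.2 hp) zero_le_one,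
          sub_add_cancel]

end Jensen

section IteratedIntegral

variable {α β γ Ω E : Type*} [MeasurableSpace α] [MeasurableSpace β] [MeasurableSpace γ]
  [MeasurableSpace Ω] [NormedAddCommGroup E] [NormedSpace ℝ E]
  {μ : Measure α} {ν : Measure β} [SFinite ν] {ρ : Measure γ} [SFinite ρ]

-- Comparing with `∫⁻` avoids Fubini for `f`, hence any integrability of its sections.
theorem enorm_integral_integral_le_lintegral_prod {f : α × β → E}
    (hf : AEStronglyMeasurable f (μ.prod ν)) :
    ‖∫ a, ∫ b, f (a, b) ∂ν ∂μ‖ₑ ≤ ∫⁻ z, ‖f z‖ₑ ∂μ.prod ν := by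
  rw [lintegral_prod _ hf.enorm]
  exact (enorm_integral_le_lintegral_enorm _).trans
    (lintegral_mono fun _ => enorm_integral_le_lintegral_enorm _)

theorem enorm_integral_integral_integral_le_lintegral_prod {f : α × β × γ → E}
    (hf : AEStronglyMeasurable f (μ.prod (ν.prod ρ))) :
    ‖∫ a, ∫ b, ∫ c, f (a, b, c) ∂ρ ∂ν ∂μ‖ₑ ≤ ∫⁻ z, ‖f z‖ₑ ∂μ.prod (ν.prod ρ) := by
  rw [lintegral_prod _ hf.enorm]
  refine (enorm_integral_le_lintegral_enorm _).trans (lintegral_mono_ae ?_)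
  filter_upwards [hf.prodMk_left] with a ha
  exact enorm_integral_integral_le_lintegral_prod ha

theorem lintegral_rpow_enorm_integral_integral_integral_le_of_ae_le [SFinite μ]
    {P : Measure Ω} [SFinite P] {p : ℝ} (hp : 1 ≤ p) {f : Ω × α × β × γ → E}
    (hf : AEStronglyMeasurable f (P.prod (μ.prod (ν.prod ρ)))) {C : ENNReal}
    (hC : ∀ᵐ z ∂μ.prod (ν.prod ρ), ∫⁻ ω, ‖f (ω, z)‖ₑ ^ p ∂P ≤ C) :
    ∫⁻ ω, ‖∫ a, ∫ b, ∫ c, f (ω, a, b, c) ∂ρ ∂ν ∂μ‖ₑ ^ p ∂P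
      ≤ C * (μ univ * (ν univ * ρ univ)) ^ p := by
  have huniv : μ.prod (ν.prod ρ) univ = μ univ * (ν univ * ρ univ) := by
    rw [← univ_prod_univ, Measure.prod_prod, ← univ_prod_univ, Measure.prod_prod]
  rw [← huniv]
  refine le_trans (lintegral_mono_ae ?_) (lintegral_rpow_lintegral_le_of_ae_le hp hf.enorm hC)
  filter_upwards [hf.prodMk_left] with ω hω
  gcongr
  exact enorm_integral_integral_integral_le_lintegral_prod hω

end IteratedIntegral

section PowerNorm

variable {Ω E : Type*} [MeasurableSpace Ω] {P : Measure Ω} [NormedAddCommGroup E]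

theorem integrable_sq_norm_sub {f g : Ω → E} (hf : AEStronglyMeasurable f P)
    (hg : AEStronglyMeasurable g P) (hf_sq : Integrable (fun ω => ‖f ω‖ ^ 2) P)
    (hg_sq : Integrable (fun ω => ‖g ω‖ ^ 2) P) :
    Integrable (fun ω => ‖f ω - g ω‖ ^ 2) P :=
  (memLp_two_iff_integrable_sq_norm (hf.sub hg)).1 <|
    ((memLp_two_iff_integrable_sq_norm hf).2 hf_sq).sub
      ((memLp_two_iff_integrable_sq_norm hg).2 hg_sq)

theorem lintegral_enorm_pow_le_ofReal {n : ℕ} {f : Ω → E} (hf : Integrable (fun ω => ‖f ω‖ ^ n) P)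
    {c : ℝ} (hc : ∫ ω, ‖f ω‖ ^ n ∂P ≤ c) : ∫⁻ ω, ‖f ω‖ₑ ^ n ∂P ≤ ENNReal.ofReal c := by
  have ofReal_integral_eq := ofReal_integral_norm_eq_lintegral_enorm hf
  simp only [norm_pow, norm_norm, enorm_pow, enorm_norm] at ofReal_integral_eq
  exact ofReal_integral_eq.symm.trans_le (ENNReal.ofReal_le_ofReal hc)

theorem integral_norm_pow_le_of_lintegral_le_ofReal {n : ℕ} {f : Ω → E} {c : ℝ} (hc : 0 ≤ c)
    (hf : ∫⁻ ω, ‖f ω‖ₑ ^ n ∂P ≤ ENNReal.ofReal c) : ∫ ω, ‖f ω‖ ^ n ∂P ≤ c := by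
  have enorm_integral_le := enorm_integral_le_lintegral_enorm (μ := P) fun ω => ‖f ω‖ ^ n
  simp only [enorm_pow, enorm_norm] at enorm_integral_le
  rw [← ENNReal.ofReal_le_ofReal_iff hc]
  exact (Real.ofReal_le_enorm _).trans (enorm_integral_le.trans hf)

end PowerNorm

section Box

theorem abs_sub_right_le_of_mem_Icc {a x l : ℝ} (hx : x ∈ Icc (a - l) a) : |x - a| ≤ l :=
  abs_le.2 ⟨by linarith [hx.1], by linarith [hx.1, hx.2]⟩

theorem ae_restrict_prod_prod_of_forall_mem {α β γ : Type*} [MeasurableSpace α]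
    [MeasurableSpace β] [MeasurableSpace γ] {μ : Measure α} [SFinite μ] {ν : Measure β} [SFinite ν]
    {ρ : Measure γ} [SFinite ρ] {S : Set α} {T : Set β} {U : Set γ} (hS : MeasurableSet S)
    (hT : MeasurableSet T) (hU : MeasurableSet U) {q : α × β × γ → Prop}
    (hq : ∀ a ∈ S, ∀ b ∈ T, ∀ c ∈ U, q (a, b, c)) :
    ∀ᵐ z ∂(μ.restrict S).prod ((ν.restrict T).prod (ρ.restrict U)), q z := by
  rw [Measure.prod_restrict, Measure.prod_restrict]
  filter_upwards [ae_restrict_mem (hS.prod (hT.prod hU))]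
  rintro ⟨a, b, c⟩ ⟨ha, hb, hc⟩
  exact hq a ha b hb c hc

end Box

section Slice

variable {α β γ Ω E : Type*} [MeasurableSpace α] [MeasurableSpace β] [MeasurableSpace γ]
  [MeasurableSpace Ω] [TopologicalSpace E] {F : α → β → γ → Ω → E}

theorem stronglyMeasurable_slice
    (hF : StronglyMeasurable fun p : α × β × γ × Ω => F p.1 p.2.1 p.2.2.1 p.2.2.2)
    (a : α) (b : β) (c : γ) : StronglyMeasurable (F a b c) :=
  hF.comp_measurable (g := fun ω => (a, b, c, ω)) (by fun_prop)

theorem stronglyMeasurable_sub_slice [Sub E] [ContinuousSub E]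
    (hF : StronglyMeasurable fun p : α × β × γ × Ω => F p.1 p.2.1 p.2.2.1 p.2.2.2)
    (a : α) (b : β) (c : γ) :
    StronglyMeasurable fun q : Ω × α × β × γ => F q.2.1 q.2.2.1 q.2.2.2 q.1 - F a b c q.1 :=
  (hF.comp_measurable (g := fun q : Ω × α × β × γ => (q.2.1, q.2.2.1, q.2.2.2, q.1))
    (by fun_prop)).sub ((stronglyMeasurable_slice hF a b c).comp_measurable measurable_fst)

end Slice

theorem microbox_quadrature_error_general
    {Ω : Type*} [MeasurableSpace Ω] (P : Measure Ω) [SFinite P]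
    {G : Type*} [NormedAddCommGroup G] [NormedSpace ℝ G] [CompleteSpace G]
    {A h₁ h₂ h₃ : ℝ} (t₁ t₂ t₃ : ℝ) (hA : 0 ≤ A) (hh₁ : 0 ≤ h₁) (hh₂ : 0 ≤ h₂) (hh₃ : 0 ≤ h₃)
    {F : ℝ → ℝ → ℝ → Ω → G}
    (hmeas : StronglyMeasurable fun p : ℝ × ℝ × ℝ × Ω => F p.1 p.2.1 p.2.2.1 p.2.2.2)
    (hsq : ∀ t ∈ Icc (t₁ - h₁) t₁, ∀ s ∈ Icc (t₂ - h₂) t₂, ∀ r ∈ Icc (t₃ - h₃) t₃,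
      Integrable (fun ω => ‖F t s r ω - F t₁ t₂ t₃ ω‖ ^ 2) P)
    (hmod : ∀ t ∈ Icc (t₁ - h₁) t₁, ∀ s ∈ Icc (t₂ - h₂) t₂, ∀ r ∈ Icc (t₃ - h₃) t₃,
      ∫ ω, ‖F t s r ω - F t₁ t₂ t₃ ω‖ ^ 2 ∂P ≤ A * (|t - t₁| + |s - t₂| + |r - t₃|)) :
    ∫ ω, ‖∫ t in (t₁ - h₁)..t₁, ∫ s in (t₂ - h₂)..t₂, ∫ r in (t₃ - h₃)..t₃,
        (F t s r ω - F t₁ t₂ t₃ ω)‖ ^ 2 ∂P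
      ≤ A * (h₁ + h₂ + h₃) * (h₁ * (h₂ * h₃)) ^ 2 := by
  have increment_le : ∀ᵐ z ∂(volume.restrict (Ioc (t₁ - h₁) t₁)).prod
      ((volume.restrict (Ioc (t₂ - h₂) t₂)).prod (volume.restrict (Ioc (t₃ - h₃) t₃))),
      ∫⁻ ω, ‖F z.1 z.2.1 z.2.2 ω - F t₁ t₂ t₃ ω‖ₑ ^ (2 : ℝ) ∂P
        ≤ ENNReal.ofReal (A * (h₁ + h₂ + h₃)) := by
    refine ae_restrict_prod_prod_of_forall_mem measurableSet_Ioc measurableSet_Ioc measurableSet_Ioc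
      fun t ht s hs r hr => ?_
    replace ht := Ioc_subset_Icc_self ht
    replace hs := Ioc_subset_Icc_self hs
    replace hr := Ioc_subset_Icc_self hr
    simp only [ENNReal.rpow_two]
    refine lintegral_enorm_pow_le_ofReal (hsq t ht s hs r hr) ((hmod t ht s hs r hr).trans ?_)
    gcongr <;> exact abs_sub_right_le_of_mem_Icc ‹_›
  have box_le := lintegral_rpow_enorm_integral_integral_integral_le_of_ae_le one_le_two
    (stronglyMeasurable_sub_slice hmeas t₁ t₂ t₃).aestronglyMeasurable increment_le
  simp only [Measure.restrict_apply_univ, Real.volume_Ioc, sub_sub_cancel, ENNReal.rpow_two,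
    ← ENNReal.ofReal_mul hh₂, ← ENNReal.ofReal_mul hh₁,
    ← ENNReal.ofReal_pow (mul_nonneg hh₁ (mul_nonneg hh₂ hh₃))] at box_le
  rw [← ENNReal.ofReal_mul (by positivity)] at box_le
  simp only [integral_of_le (sub_le_self _ hh₁), integral_of_le (sub_le_self _ hh₂),
    integral_of_le (sub_le_self _ hh₃)]
  exact integral_norm_pow_le_of_lintegral_le_ofReal (by positivity) box_le

/-- Local quadrature error on a micro-box against the corner value: if
`𝔼‖F(t,s,r) - F(t',s',r')‖² ≤ A (|t-t'| + |s-s'| + |r-r'|)` on the cube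
`R = [t₁-h,t₁] × [t₂-h,t₂] × [t₃-h,t₃]`, then
`𝔼‖∫_R (F(t,s,r) - F(t₁,t₂,t₃)) ds dt dr‖² ≤ 3 A h⁷`. -/
theorem microbox_quadrature_error
    {Ω : Type*} [MeasurableSpace Ω] (ℙ : Measure Ω) [IsProbabilityMeasure ℙ]
    {G : Type*} [NormedAddCommGroup G] [NormedSpace ℝ G] [CompleteSpace G]
    (A h t₁ t₂ t₃ : ℝ) (hA : 0 ≤ A) (hh : 0 < h)
    (F : ℝ → ℝ → ℝ → Ω → G)
    (hmeas : StronglyMeasurable fun p : ℝ × ℝ × ℝ × Ω => F p.1 p.2.1 p.2.2.1 p.2.2.2)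
    (hsq : ∀ t ∈ Icc (t₁ - h) t₁, ∀ s ∈ Icc (t₂ - h) t₂, ∀ r ∈ Icc (t₃ - h) t₃,
      Integrable (fun ω => ‖F t s r ω‖ ^ 2) ℙ)
    (hmod : ∀ t ∈ Icc (t₁ - h) t₁, ∀ s ∈ Icc (t₂ - h) t₂, ∀ r ∈ Icc (t₃ - h) t₃,
      ∀ t' ∈ Icc (t₁ - h) t₁, ∀ s' ∈ Icc (t₂ - h) t₂, ∀ r' ∈ Icc (t₃ - h) t₃,
      ∫ ω, ‖F t s r ω - F t' s' r' ω‖ ^ 2 ∂ℙ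
        ≤ A * (|t - t'| + |s - s'| + |r - r'|)) :
    ∫ ω, ‖∫ t in (t₁ - h)..t₁, ∫ s in (t₂ - h)..t₂, ∫ r in (t₃ - h)..t₃,
        (F t s r ω - F t₁ t₂ t₃ ω)‖ ^ 2 ∂ℙ
      ≤ 3 * A * h ^ 7 := by
  have corner_mem (x : ℝ) : x ∈ Icc (x - h) x := right_mem_Icc.2 (sub_le_self x hh.le)
  have slice_meas (t s r : ℝ) : AEStronglyMeasurable (F t s r) ℙ :=
    (stronglyMeasurable_slice hmeas t s r).aestronglyMeasurable
  exact (microbox_quadrature_error_general ℙ t₁ t₂ t₃ hA hh.le hh.le hh.le hmeas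
    (fun t ht s hs r hr => integrable_sq_norm_sub (slice_meas t s r) (slice_meas t₁ t₂ t₃)
      (hsq t ht s hs r hr) (hsq t₁ (corner_mem t₁) t₂ (corner_mem t₂) t₃ (corner_mem t₃)))
    fun t ht s hs r hr => hmod t ht s hs r hr t₁ (corner_mem t₁) t₂ (corner_mem t₂)
      t₃ (corner_mem t₃)).trans_eq (by ring)
end

section
/- Let (Ω, 𝔉, ℙ) be a probability space, let E, G be real Banach spaces, let B : E × E → G be a bilinear map with ‖B(u, v)‖ ≤ ‖u‖·‖v‖, let M be a positive integer, τ := 1/M, h := τ², and let Z : [0, τ] × Ω → E be a jointly strongly measurable process with Z square-integrable in the fourth moment (sup_t 𝔼‖Z(t)‖⁴ < ∞) and satisfying 𝔼[ ‖Z(t) - Z(s)‖⁴ ] ≤ C²·|t - s|² for all s, t ∈ [0, τ], for some C ≥ 0. Define F(t, s, r) := B(Z(t) - Z(s), Z(t) - Z(r)), the triple Bochner integral 𝐁 := ∫_0^τ ∫_0^τ ∫_0^τ F(t, s, r) ds dt dr, and the triple Riemann sum 𝐁^disc := h³ · Σ_{ℓ=1}^{M} Σ_{k=1}^{M} Σ_{j=1}^{M}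 F(ℓh, kh, jh). Then there is a constant K > 0, depending only on C (not on τ, M, Z, B), such that 𝔼[ ‖𝐁 - 𝐁^disc‖² ] ≤ K·τ⁹. Equivalently, 𝔼[ ‖τ^{-3}𝐁 - τ^{-3}𝐁^disc‖² ] ≤ K·τ³. -/
open MeasureTheory Set intervalIntegral Finset

open scoped ENNReal NNReal

/-!
The Riemann sum is the same triple integral for the process `Z` frozen at the grid point above the
current time. Minkowski's integral inequality reduces the comparison of the two integrals to an `Lᵖ`
bound on the difference of the integrands, uniform in the three times. By bilinearity each term of
that difference pairs an increment over a time at most `τ`, of `L⁴` size `(C τ)^(1/2)`, with an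
increment over a time at most `h`, of `L⁴` size `(C h)^(1/2)`. Hölder's inequality then bounds the
`L²` error by `4 τ³ (C τ)^(1/2) (C h)^(1/2)`.
-/

section Moments

variable {Ω G : Type*} [MeasurableSpace Ω] {ℙ : Measure Ω} [NormedAddCommGroup G] {f : Ω → G}
  {n : ℕ} {c : ℝ}

lemma ofReal_integral_norm_pow (hn : n ≠ 0) (hf : Integrable (fun ω => ‖f ω‖ ^ n) ℙ) :
    ENNReal.ofReal (∫ ω, ‖f ω‖ ^ n ∂ℙ) = eLpNorm f n ℙ ^ n := by
  have hpow := eLpNorm_nnreal_pow_eq_lintegral (μ := ℙ) (f := f)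
    (Nat.cast_ne_zero.2 hn : (n : ℝ≥0) ≠ 0)
  simp only [ENNReal.coe_natCast, NNReal.coe_natCast, ENNReal.rpow_natCast] at hpow
  rw [hpow, ofReal_integral_eq_lintegral_ofReal hf (ae_of_all _ fun ω => by positivity)]
  simp only [ENNReal.ofReal_pow (norm_nonneg _), ofReal_norm]

lemma eLpNorm_le_of_integral_norm_pow_le (hn : n ≠ 0) (hc : 0 ≤ c)
    (hf : Integrable (fun ω => ‖f ω‖ ^ n) ℙ) (hfc : ∫ ω, ‖f ω‖ ^ n ∂ℙ ≤ c ^ n) :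
    eLpNorm f n ℙ ≤ ENNReal.ofReal c := by
  rw [← ENNReal.pow_le_pow_left_iff hn, ← ofReal_integral_norm_pow hn hf,
    ← ENNReal.ofReal_pow hc]
  exact ENNReal.ofReal_le_ofReal hfc

lemma integral_norm_pow_le_of_eLpNorm_le (hn : n ≠ 0) (hc : 0 ≤ c)
    (hfc : eLpNorm f n ℙ ≤ ENNReal.ofReal c) : ∫ ω, ‖f ω‖ ^ n ∂ℙ ≤ c ^ n := by
  by_cases hf : Integrable (fun ω => ‖f ω‖ ^ n) ℙ
  · rw [← ENNReal.ofReal_le_ofReal_iff (by positivity), ofReal_integral_norm_pow hn hf,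
      ENNReal.ofReal_pow hc]
    gcongr
  · rw [integral_undef hf]
    positivity

lemma integrable_norm_sub_pow {g : Ω → G} (hn : n ≠ 0) (hfm : AEStronglyMeasurable f ℙ)
    (hgm : AEStronglyMeasurable g ℙ) (hf : Integrable (fun ω => ‖f ω‖ ^ n) ℙ)
    (hg : Integrable (fun ω => ‖g ω‖ ^ n) ℙ) :
    Integrable (fun ω => ‖f ω - g ω‖ ^ n) ℙ := by
  have memLp {k : Ω → G} (hkm : AEStronglyMeasurable k ℙ)
      (hk : Integrable (fun ω => ‖k ω‖ ^ n) ℙ) : MemLp k n ℙ :=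
    (integrable_norm_rpow_iff hkm (Nat.cast_ne_zero.2 hn) (ENNReal.natCast_ne_top n)).1
      (by simpa only [ENNReal.toReal_natCast, Real.rpow_natCast] using hk)
  exact ((memLp hfm hf).sub (memLp hgm hg)).integrable_norm_pow hn

end Moments

section ParameterIntegral

variable {A Ω G : Type*} [MeasurableSpace A] [MeasurableSpace Ω] [NormedAddCommGroup G]
  {μ : Measure A} {ℙ : Measure Ω} [SFinite ℙ] {p c : ℝ≥0∞} {f g : A → Ω → G}

lemma lintegral_eLpNorm_rpow_swap [SFinite μ] (hp₀ : p ≠ 0) (hp : p ≠ ∞)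
    (hf : StronglyMeasurable (Function.uncurry f)) :
    ∫⁻ ω, eLpNorm (f · ω) p μ ^ p.toReal ∂ℙ = ∫⁻ a, eLpNorm (f a) p ℙ ^ p.toReal ∂μ := by
  lift p to ℝ≥0 using hp
  rw [ENNReal.coe_ne_zero] at hp₀
  simp only [ENNReal.coe_toReal, eLpNorm_nnreal_pow_eq_lintegral hp₀]
  exact lintegral_lintegral_swap
    ((hf.enorm.pow_const (p : ℝ)).comp measurable_swap).aemeasurable

lemma lintegral_eLpNorm_rpow_le [SFinite μ] (hp₀ : p ≠ 0) (hp : p ≠ ∞)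
    (hf : StronglyMeasurable (Function.uncurry f)) (hfc : ∀ᵐ a ∂μ, eLpNorm (f a) p ℙ ≤ c) :
    ∫⁻ ω, eLpNorm (f · ω) p μ ^ p.toReal ∂ℙ ≤ μ univ * c ^ p.toReal := by
  rw [lintegral_eLpNorm_rpow_swap hp₀ hp hf, mul_comm, ← lintegral_const]
  exact lintegral_mono_ae (hfc.mono fun a ha => by gcongr)

lemma ae_integrable_of_ae_eLpNorm_le [IsFiniteMeasure μ] (hp₁ : 1 ≤ p) (hp : p ≠ ∞)
    (hf : StronglyMeasurable (Function.uncurry f)) (hc : c ≠ ∞)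
    (hfc : ∀ᵐ a ∂μ, eLpNorm (f a) p ℙ ≤ c) : ∀ᵐ ω ∂ℙ, Integrable (f · ω) μ := by
  have hp₀ : p ≠ 0 := (zero_lt_one.trans_le hp₁).ne'
  have hfin : ∫⁻ ω, eLpNorm (f · ω) p μ ^ p.toReal ∂ℙ ≠ ∞ :=
    ne_top_of_le_ne_top (by finiteness) (lintegral_eLpNorm_rpow_le hp₀ hp hf hfc)
  have hmeas : Measurable fun ω => eLpNorm (f · ω) p μ ^ p.toReal := by
    lift p to ℝ≥0 using hp
    simp only [ENNReal.coe_toReal, eLpNorm_nnreal_pow_eq_lintegral (ENNReal.coe_ne_zero.1 hp₀)]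
    exact (hf.enorm.pow_const (p : ℝ)).lintegral_prod_left'
  filter_upwards [ae_lt_top hmeas hfin] with ω hω
  have hsection : AEStronglyMeasurable (f · ω) μ :=
    (hf.comp_measurable measurable_prodMk_right).aestronglyMeasurable
  exact MemLp.integrable hp₁
    ⟨hsection, (ENNReal.rpow_lt_top_iff_of_pos (ENNReal.toReal_pos hp₀ hp)).1 hω⟩

variable [NormedSpace ℝ G]

lemma enorm_integral_le_eLpNorm_mul_measure_univ (hp₁ : 1 ≤ p) {k : A → G}
    (hk : AEStronglyMeasurable k μ) :
    ‖∫ a, k a ∂μ‖ₑ ≤ eLpNorm k p μ * μ univ ^ (1 - 1 / p.toReal) := by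
  calc ‖∫ a, k a ∂μ‖ₑ ≤ eLpNorm k 1 μ := by
        rw [eLpNorm_one_eq_lintegral_enorm]
        exact enorm_integral_le_lintegral_enorm k
    _ ≤ _ := by simpa using eLpNorm_le_eLpNorm_mul_rpow_measure_univ hp₁ hk

variable [IsFiniteMeasure μ]

-- Minkowski's integral inequality for a uniform bound, where Jensen and Tonelli suffice.
lemma eLpNorm_integral_le_measure_univ_mul (hp₁ : 1 ≤ p) (hp : p ≠ ∞)
    (hf : StronglyMeasurable (Function.uncurry f)) (hfc : ∀ᵐ a ∂μ, eLpNorm (f a) p ℙ ≤ c) :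
    eLpNorm (fun ω => ∫ a, f a ω ∂μ) p ℙ ≤ μ univ * c := by
  have hp₀ : p ≠ 0 := (zero_lt_one.trans_le hp₁).ne'
  have hpos : 0 < p.toReal := ENNReal.toReal_pos hp₀ hp
  have hone : 1 ≤ p.toReal := by simpa using ENNReal.toReal_mono hp hp₁
  have hsection (ω : Ω) : AEStronglyMeasurable (f · ω) μ :=
    (hf.comp_measurable measurable_prodMk_right).aestronglyMeasurable
  have hexp : (1 - 1 / p.toReal) * p.toReal = p.toReal - 1 := by field_simp
  have hexp_nonneg : 0 ≤ (1 - 1 / p.toReal) * p.toReal := by rw [hexp]; linarith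
  rw [← ENNReal.rpow_le_rpow_iff hpos]
  calc eLpNorm (fun ω => ∫ a, f a ω ∂μ) p ℙ ^ p.toReal
      = ∫⁻ ω, ‖∫ a, f a ω ∂μ‖ₑ ^ p.toReal ∂ℙ := by
        lift p to ℝ≥0 using hp
        exact eLpNorm_nnreal_pow_eq_lintegral (ENNReal.coe_ne_zero.1 hp₀)
    _ ≤ ∫⁻ ω, (eLpNorm (f · ω) p μ * μ univ ^ (1 - 1 / p.toReal)) ^ p.toReal ∂ℙ := by
        gcongr with ω
        exact enorm_integral_le_eLpNorm_mul_measure_univ hp₁ (hsection ω)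
    _ = (∫⁻ ω, eLpNorm (f · ω) p μ ^ p.toReal ∂ℙ) * μ univ ^ (p.toReal - 1) := by
        simp only [ENNReal.mul_rpow_of_nonneg _ _ hpos.le, ← ENNReal.rpow_mul, hexp]
        exact lintegral_mul_const' _ _
          (ENNReal.rpow_ne_top_of_nonneg (by linarith) (measure_ne_top μ univ))
    _ ≤ μ univ * c ^ p.toReal * μ univ ^ (p.toReal - 1) := by
        gcongr
        exact lintegral_eLpNorm_rpow_le hp₀ hp hf hfc
    _ = (μ univ * c) ^ p.toReal := by
        have hsplit : μ univ ^ p.toReal = μ univ * μ univ ^ (p.toReal - 1) := by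
          nth_rw 2 [← ENNReal.rpow_one (μ univ)]
          rw [← ENNReal.rpow_add_of_nonneg _ _ zero_le_one (by linarith)]
          congr 1
          ring
        rw [ENNReal.mul_rpow_of_nonneg _ _ hpos.le, hsplit]
        ring

lemma eLpNorm_integral_sub_integral_le (hp₁ : 1 ≤ p) (hp : p ≠ ∞)
    (hf : StronglyMeasurable (Function.uncurry f)) (hg : StronglyMeasurable (Function.uncurry g))
    {d : ℝ≥0∞} (hc : c ≠ ∞) (hfc : ∀ᵐ a ∂μ, eLpNorm (f a) p ℙ ≤ c)
    (hgc : ∀ᵐ a ∂μ, eLpNorm (g a) p ℙ ≤ c) (hfg : ∀ᵐ a ∂μ, eLpNorm (f a - g a) p ℙ ≤ d) :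
    eLpNorm (fun ω => ∫ a, f a ω ∂μ - ∫ a, g a ω ∂μ) p ℙ ≤ μ univ * d := by
  have hsub : (fun ω => ∫ a, f a ω ∂μ - ∫ a, g a ω ∂μ) =ᵐ[ℙ] fun ω => ∫ a, (f a - g a) ω ∂μ := by
    filter_upwards [ae_integrable_of_ae_eLpNorm_le hp₁ hp hf hc hfc,
      ae_integrable_of_ae_eLpNorm_le hp₁ hp hg hc hgc] with ω hfω hgω
    exact (integral_sub hfω hgω).symm
  rw [eLpNorm_congr_ae hsub]
  exact eLpNorm_integral_le_measure_univ_mul (f := fun a => f a - g a) hp₁ hp (hf.sub hg) hfg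

end ParameterIntegral

section IncrementProduct

variable {A Ω E G : Type*} [NormedAddCommGroup E] [NormedSpace ℝ E]
  [NormedAddCommGroup G] [NormedSpace ℝ G]

/-- The integrand `F(t, s, r) = B(x(t) - x(s), x(t) - x(r))` built from two increments of a path
`x`, as a function of the triple `(t, s, r)`. -/
noncomputable def incrementProduct (B : E →L[ℝ] E →L[ℝ] G) (x : A → E) (a : A × A × A) : G :=
  B (x a.1 - x a.2.1) (x a.1 - x a.2.2)

variable [MeasurableSpace Ω] {ℙ : Measure Ω} {X Y : A → Ω → E} {p q D δ : ℝ≥0∞}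
  (B : E →L[ℝ] E →L[ℝ] G)

lemma eLpNorm_bilin_le {q' : ℝ≥0∞} [ENNReal.HolderTriple q q' p] {u v : Ω → E}
    (hu : AEStronglyMeasurable u ℙ) (hv : AEStronglyMeasurable v ℙ) :
    eLpNorm (fun ω => B (u ω) (v ω)) p ℙ ≤ ‖B‖ₑ * eLpNorm u q ℙ * eLpNorm v q' ℙ :=
  eLpNorm_le_eLpNorm_mul_eLpNorm_of_nnnorm hu hv (fun x y => B x y) ‖B‖₊
    (ae_of_all _ fun ω => B.le_opNorm₂ (u ω) (v ω))

lemma stronglyMeasurable_incrementProduct [MeasurableSpace A]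
    (hX : StronglyMeasurable (Function.uncurry X)) :
    StronglyMeasurable (Function.uncurry fun a ω => incrementProduct B (X · ω) a) := by
  have hcoord {c : A × A × A → A} (hc : Measurable c) :
      StronglyMeasurable fun z : (A × A × A) × Ω => X (c z.1) z.2 :=
    hX.comp_measurable ((hc.comp measurable_fst).prodMk measurable_snd)
  have hB : Continuous fun u : E × E => B u.1 u.2 := by fun_prop
  have ht := hcoord measurable_fst
  exact hB.comp_stronglyMeasurable
    ((ht.sub (hcoord measurable_snd.fst)).prodMk (ht.sub (hcoord measurable_snd.snd)))

variable [ENNReal.HolderTriple q q p]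

lemma eLpNorm_incrementProduct_le {S : Set A} (hX : ∀ a, AEStronglyMeasurable (X a) ℙ)
    (hXD : ∀ s ∈ S, ∀ t ∈ S, eLpNorm (X t - X s) q ℙ ≤ D) {a : A × A × A}
    (ha : a ∈ S ×ˢ S ×ˢ S) :
    eLpNorm (fun ω => incrementProduct B (X · ω) a) p ℙ ≤ ‖B‖ₑ * D * D := by
  obtain ⟨ht, hs, hr⟩ := ha
  refine (eLpNorm_bilin_le (q := q) (q' := q) B ((hX _).sub (hX _)) ((hX _).sub (hX _))).trans ?_
  gcongr
  exacts [hXD _ hs _ ht, hXD _ hr _ ht]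

-- `B(u, v) - B(u', v') = B(u - u', v) + B(u', v - v')`, and each term pairs one increment with a
-- difference of increments, which costs `2 δ`.
lemma eLpNorm_incrementProduct_sub_le {S : Set A} (hp₁ : 1 ≤ p)
    (hX : ∀ a, AEStronglyMeasurable (X a) ℙ) (hY : ∀ a, AEStronglyMeasurable (Y a) ℙ)
    (hXD : ∀ s ∈ S, ∀ t ∈ S, eLpNorm (X t - X s) q ℙ ≤ D)
    (hYD : ∀ s ∈ S, ∀ t ∈ S, eLpNorm (Y t - Y s) q ℙ ≤ D)
    (hXY : ∀ t ∈ S, eLpNorm (X t - Y t) q ℙ ≤ δ) {a : A × A × A} (ha : a ∈ S ×ˢ S ×ˢ S) :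
    eLpNorm (fun ω => incrementProduct B (X · ω) a - incrementProduct B (Y · ω) a) p ℙ
      ≤ 4 * ‖B‖ₑ * D * δ := by
  have hq₁ : 1 ≤ q := hp₁.trans (ENNReal.HolderTriple.le q q p)
  obtain ⟨t, s, r⟩ := a
  obtain ⟨ht, hs, hr⟩ : t ∈ S ∧ s ∈ S ∧ r ∈ S := ha
  have hXinc (b : A) : AEStronglyMeasurable (X t - X b) ℙ := (hX t).sub (hX b)
  have hYinc (b : A) : AEStronglyMeasurable (Y t - Y b) ℙ := (hY t).sub (hY b)
  have hdiff {b : A} (hb : b ∈ S) : eLpNorm ((X t - X b) - (Y t - Y b)) q ℙ ≤ δ + δ := by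
    rw [sub_sub_sub_comm]
    exact (eLpNorm_sub_le ((hX t).sub (hY t)) ((hX b).sub (hY b)) hq₁).trans
      (add_le_add (hXY t ht) (hXY b hb))
  let first : Ω → G := fun ω => B (((X t - X s) - (Y t - Y s)) ω) ((X t - X r) ω)
  let second : Ω → G := fun ω => B ((Y t - Y s) ω) (((X t - X r) - (Y t - Y r)) ω)
  have hsplit : (fun ω => incrementProduct B (X · ω) (t, s, r)
      - incrementProduct B (Y · ω) (t, s, r)) = first + second := by
    ext ω
    simp only [incrementProduct, first, second, Pi.add_apply, Pi.sub_apply, map_sub,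
      sub_apply]
    abel
  have hB : Continuous fun u : E × E => B u.1 u.2 := by fun_prop
  have hfirst : eLpNorm first p ℙ ≤ ‖B‖ₑ * (δ + δ) * D :=
    (eLpNorm_bilin_le B ((hXinc s).sub (hYinc s)) (hXinc r)).trans
      (by gcongr; exacts [hdiff hs, hXD r hr t ht])
  have hsecond : eLpNorm second p ℙ ≤ ‖B‖ₑ * D * (δ + δ) :=
    (eLpNorm_bilin_le B (hYinc s) ((hXinc r).sub (hYinc r))).trans
      (by gcongr; exacts [hYD s hs t ht, hdiff hr])
  rw [hsplit]
  calc eLpNorm (first + second) p ℙ ≤ eLpNorm first p ℙ + eLpNorm second p ℙ :=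
        eLpNorm_add_le
          (hB.comp_aestronglyMeasurable (((hXinc s).sub (hYinc s)).prodMk (hXinc r)))
          (hB.comp_aestronglyMeasurable ((hYinc s).prodMk ((hXinc r).sub (hYinc r)))) hp₁
    _ ≤ ‖B‖ₑ * (δ + δ) * D + ‖B‖ₑ * D * (δ + δ) := add_le_add hfirst hsecond
    _ = 4 * ‖B‖ₑ * D * δ := by ring

end IncrementProduct

section TripleIntegral

variable {Ω E G : Type*} [NormedAddCommGroup E] [NormedSpace ℝ E]
  [NormedAddCommGroup G] [NormedSpace ℝ G] (B : E →L[ℝ] E →L[ℝ] G)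

/-- The triple integral of `incrementProduct B x` over `[0, τ]³`, written `𝐁` for the path `x`. -/
noncomputable def tripleIntegral (x : ℝ → E) (τ : ℝ) : G :=
  ∫ t in (0 : ℝ)..τ, ∫ s in (0 : ℝ)..τ, ∫ r in (0 : ℝ)..τ, incrementProduct B x (t, s, r)

/-- The right-endpoint Riemann sum `𝐁^disc` of `tripleIntegral B x (M * h)` with mesh `h`. -/
noncomputable def tripleRiemannSum (x : ℝ → E) (h : ℝ) (M : ℕ) : G :=
  h ^ 3 • ∑ ℓ ∈ Finset.Icc 1 M, ∑ k ∈ Finset.Icc 1 M, ∑ j ∈ Finset.Icc 1 M,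
    incrementProduct B x (ℓ * h, k * h, j * h)

lemma integral_integral_integral {A₁ A₂ A₃ : Type*} [MeasurableSpace A₁] [MeasurableSpace A₂]
    [MeasurableSpace A₃] {μ₁ : Measure A₁} {μ₂ : Measure A₂} {μ₃ : Measure A₃} [SFinite μ₁]
    [SFinite μ₂] [SFinite μ₃] {F : A₁ × A₂ × A₃ → G} (hF : Integrable F (μ₁.prod (μ₂.prod μ₃))) :
    ∫ t, ∫ s, ∫ r, F (t, s, r) ∂μ₃ ∂μ₂ ∂μ₁ = ∫ a, F a ∂μ₁.prod (μ₂.prod μ₃) := by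
  rw [integral_prod _ hF]
  refine integral_congr_ae ?_
  filter_upwards [hF.prod_right_ae] with t ht
  exact (integral_prod _ ht).symm

/-- The restriction of Lebesgue measure to the cube `(0, τ]³`. -/
noncomputable def cubeMeasure (τ : ℝ) : Measure (ℝ × ℝ × ℝ) :=
  (volume.restrict (Ioc 0 τ)).prod
    ((volume.restrict (Ioc 0 τ)).prod (volume.restrict (Ioc 0 τ)))

instance (τ : ℝ) : IsFiniteMeasure (cubeMeasure τ) := by
  unfold cubeMeasure
  infer_instance

lemma cubeMeasure_univ (τ : ℝ) : cubeMeasure τ univ = ENNReal.ofReal τ ^ 3 := by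
  simp only [cubeMeasure, ← univ_prod_univ, Measure.prod_prod, Measure.restrict_apply_univ,
    Real.volume_Ioc, sub_zero]
  ring

lemma ae_mem_cube (τ : ℝ) : ∀ᵐ a ∂cubeMeasure τ, a ∈ Ioc 0 τ ×ˢ Ioc 0 τ ×ˢ Ioc 0 τ := by
  rw [cubeMeasure, Measure.prod_restrict, Measure.prod_restrict]
  exact ae_restrict_mem (measurableSet_Ioc.prod (measurableSet_Ioc.prod measurableSet_Ioc))

lemma tripleIntegral_eq_integral {x : ℝ → E} {τ : ℝ} (hτ : 0 ≤ τ)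
    (hx : Integrable (incrementProduct B x) (cubeMeasure τ)) :
    tripleIntegral B x τ = ∫ a, incrementProduct B x a ∂cubeMeasure τ := by
  simp only [tripleIntegral, integral_of_le hτ]
  exact integral_integral_integral hx

variable [MeasurableSpace Ω] {ℙ : Measure Ω} [SFinite ℙ] {X Y : ℝ → Ω → E} {p q D δ : ℝ≥0∞}
  [ENNReal.HolderTriple q q p] {τ : ℝ}

lemma eLpNorm_tripleIntegral_sub_le (hp₁ : 1 ≤ p) (hp : p ≠ ∞) (hτ : 0 ≤ τ)
    (hX : StronglyMeasurable (Function.uncurry X)) (hY : StronglyMeasurable (Function.uncurry Y))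
    (hD : D ≠ ∞) (hXD : ∀ s ∈ Ioc 0 τ, ∀ t ∈ Ioc 0 τ, eLpNorm (X t - X s) q ℙ ≤ D)
    (hYD : ∀ s ∈ Ioc 0 τ, ∀ t ∈ Ioc 0 τ, eLpNorm (Y t - Y s) q ℙ ≤ D)
    (hXY : ∀ t ∈ Ioc 0 τ, eLpNorm (X t - Y t) q ℙ ≤ δ) :
    eLpNorm (fun ω => tripleIntegral B (X · ω) τ - tripleIntegral B (Y · ω) τ) p ℙ
      ≤ ENNReal.ofReal τ ^ 3 * (4 * ‖B‖ₑ * D * δ) := by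
  have hsection {W : ℝ → Ω → E} (hW : StronglyMeasurable (Function.uncurry W)) (t : ℝ) :
      AEStronglyMeasurable (W t) ℙ :=
    (hW.comp_measurable measurable_prodMk_left).aestronglyMeasurable
  have hbound {W : ℝ → Ω → E} (hW : StronglyMeasurable (Function.uncurry W))
      (hWD : ∀ s ∈ Ioc 0 τ, ∀ t ∈ Ioc 0 τ, eLpNorm (W t - W s) q ℙ ≤ D) :
      ∀ᵐ a ∂cubeMeasure τ, eLpNorm (fun ω => incrementProduct B (W · ω) a) p ℙ ≤ ‖B‖ₑ * D * D :=
    (ae_mem_cube τ).mono fun a => eLpNorm_incrementProduct_le B (hsection hW) hWD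
  have hmeas {W : ℝ → Ω → E} (hW : StronglyMeasurable (Function.uncurry W)) :=
    stronglyMeasurable_incrementProduct B hW
  have hfin : ‖B‖ₑ * D * D ≠ ∞ := by finiteness
  have hprod : (fun ω => tripleIntegral B (X · ω) τ - tripleIntegral B (Y · ω) τ) =ᵐ[ℙ] fun ω =>
      ∫ a, incrementProduct B (X · ω) a ∂cubeMeasure τ
        - ∫ a, incrementProduct B (Y · ω) a ∂cubeMeasure τ := by
    filter_upwards [ae_integrable_of_ae_eLpNorm_le hp₁ hp (hmeas hX) hfin (hbound hX hXD),
      ae_integrable_of_ae_eLpNorm_le hp₁ hp (hmeas hY) hfin (hbound hY hYD)] with ω hXω hYω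
    rw [tripleIntegral_eq_integral B hτ hXω, tripleIntegral_eq_integral B hτ hYω]
  rw [eLpNorm_congr_ae hprod, ← cubeMeasure_univ]
  exact eLpNorm_integral_sub_integral_le hp₁ hp (hmeas hX) (hmeas hY) hfin (hbound hX hXD)
    (hbound hY hYD) ((ae_mem_cube τ).mono fun a =>
      eLpNorm_incrementProduct_sub_le B hp₁ (hsection hX) (hsection hY) hXD hYD hXY)

end TripleIntegral

section Grid

variable {G : Type*} [NormedAddCommGroup G] {h τ t : ℝ} {M : ℕ}

/-- The least nonnegative multiple of the mesh `h` that is at least `t`. -/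
noncomputable def roundUp (h t : ℝ) : ℝ := ⌈t / h⌉₊ * h

lemma measurable_roundUp (h : ℝ) : Measurable (roundUp h) :=
  (measurable_from_nat.comp (Nat.measurable_ceil.comp (measurable_id.div_const h))).mul_const h

lemma le_roundUp (hh : 0 < h) (t : ℝ) : t ≤ roundUp h t :=
  (div_le_iff₀ hh).1 (Nat.le_ceil (t / h))

lemma roundUp_sub_le (hh : 0 < h) (ht : 0 ≤ t) : roundUp h t - t ≤ h := by
  have hceil : (⌈t / h⌉₊ : ℝ) ≤ t / h + 1 := (Nat.ceil_lt_add_one (by positivity)).le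
  calc roundUp h t - t ≤ (t / h + 1) * h - t := by unfold roundUp; gcongr
    _ = h := by field_simp; ring

lemma roundUp_mem_Ioc (hh : 0 < h) (ht : t ∈ Ioc 0 (M * h)) : roundUp h t ∈ Ioc 0 (M * h) := by
  refine ⟨ht.1.trans_le (le_roundUp hh t), mul_le_mul_of_nonneg_right ?_ hh.le⟩
  exact_mod_cast Nat.ceil_le.2 ((div_le_iff₀ hh).2 ht.2)

lemma roundUp_eq (hh : 0 < h) {k : ℕ} (ht : t ∈ Ioc (k * h) ((k + 1 : ℕ) * h)) :
    roundUp h t = (k + 1 : ℕ) * h := by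
  have hceil : ⌈t / h⌉₊ = k + 1 :=
    (Nat.ceil_eq_iff k.succ_ne_zero).2 ⟨(lt_div_iff₀ hh).2 ht.1, (div_le_iff₀ hh).2 ht.2⟩
  rw [roundUp, hceil]

variable [NormedSpace ℝ G] [CompleteSpace G]

lemma integral_comp_roundUp (hh : 0 < h) (g : ℝ → G) (M : ℕ) :
    ∫ t in (0 : ℝ)..M * h, g (roundUp h t) = h • ∑ k ∈ Finset.Icc 1 M, g (k * h) := by
  have hle (k : ℕ) : (k : ℝ) * h ≤ (k + 1 : ℕ) * h := by gcongr; exact k.le_succ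
  have hconst (k : ℕ) : EqOn (fun _ => g ((k + 1 : ℕ) * h)) (fun t => g (roundUp h t))
      (uIoc (k * h) ((k + 1 : ℕ) * h)) := fun t ht => by
    rw [uIoc_of_le (hle k)] at ht
    simp only [roundUp_eq hh ht]
  have hcell (k : ℕ) : ∫ t in (k : ℝ) * h..(k + 1 : ℕ) * h, g (roundUp h t)
      = h • g ((k + 1 : ℕ) * h) := by
    rw [← integral_congr_ae (ae_of_all _ fun t ht => hconst k ht), intervalIntegral.integral_const,
      ← sub_mul]
    simp
  have hsum := sum_integral_adjacent_intervals (μ := volume) (a := fun k : ℕ => (k : ℝ) * h)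
    (n := M) fun k _ => intervalIntegrable_const.congr (hconst k)
  simp only [Nat.cast_zero, zero_mul, hcell] at hsum
  rw [← hsum, ← Finset.smul_sum, Finset.range_eq_Ico,
    Finset.sum_Ico_add' (fun k : ℕ => g (k * h)) 0 M 1]
  rfl

variable {Ω E : Type*} [NormedAddCommGroup E] [NormedSpace ℝ E] (B : E →L[ℝ] E →L[ℝ] G)

lemma tripleIntegral_comp_roundUp (hh : 0 < h) (x : ℝ → E) (M : ℕ) :
    tripleIntegral B (x ∘ roundUp h) (M * h) = tripleRiemannSum B x h M := by
  let F (t s r : ℝ) : G := incrementProduct B x (t, s, r)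
  let F₁ (t s : ℝ) : G := h • ∑ j ∈ Finset.Icc 1 M, F t s (j * h)
  let F₂ (t : ℝ) : G := h • ∑ k ∈ Finset.Icc 1 M, F₁ t (k * h)
  calc tripleIntegral B (x ∘ roundUp h) (M * h)
      = ∫ t in (0 : ℝ)..M * h, ∫ s in (0 : ℝ)..M * h, ∫ r in (0 : ℝ)..M * h,
          F (roundUp h t) (roundUp h s) (roundUp h r) := rfl
    _ = ∫ t in (0 : ℝ)..M * h, ∫ s in (0 : ℝ)..M * h, F₁ (roundUp h t) (roundUp h s) := by
        simp only [integral_comp_roundUp hh (F _ _), F₁]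
    _ = ∫ t in (0 : ℝ)..M * h, F₂ (roundUp h t) := by
        simp only [integral_comp_roundUp hh (F₁ _), F₂]
    _ = h • ∑ ℓ ∈ Finset.Icc 1 M, F₂ (ℓ * h) := integral_comp_roundUp hh F₂ M
    _ = tripleRiemannSum B x h M := by
        simp only [← Finset.smul_sum, smul_smul, tripleRiemannSum, F₂, F₁, F, pow_succ, pow_zero,
          one_mul, mul_assoc]

variable [MeasurableSpace Ω] {ℙ : Measure Ω} [SFinite ℙ] {Z : ℝ → Ω → E} {p q : ℝ≥0∞}
  [ENNReal.HolderTriple q q p] {w : ℝ → ℝ≥0∞}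

lemma eLpNorm_tripleIntegral_sub_tripleRiemannSum_le (hp₁ : 1 ≤ p) (hp : p ≠ ∞)
    (hZ : StronglyMeasurable (Function.uncurry Z)) (hh : 0 < h) (hτ : M * h = τ)
    (hw : Monotone w) (hwτ : w τ ≠ ∞)
    (hinc : ∀ s ∈ Ioc 0 τ, ∀ t ∈ Ioc 0 τ, eLpNorm (Z t - Z s) q ℙ ≤ w |t - s|) :
    eLpNorm (fun ω => tripleIntegral B (Z · ω) τ - tripleRiemannSum B (Z · ω) h M) p ℙ
      ≤ ENNReal.ofReal τ ^ 3 * (4 * ‖B‖ₑ * w τ * w h) := by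
  have hround {t : ℝ} (ht : t ∈ Ioc 0 τ) : roundUp h t ∈ Ioc 0 τ :=
    hτ ▸ roundUp_mem_Ioc hh (hτ.symm ▸ ht)
  have hincτ : ∀ s ∈ Ioc 0 τ, ∀ t ∈ Ioc 0 τ, eLpNorm (Z t - Z s) q ℙ ≤ w τ := fun s hs t ht =>
    (hinc s hs t ht).trans (hw (abs_sub_le_of_nonneg_of_le ht.1.le ht.2 hs.1.le hs.2))
  have hinch : ∀ t ∈ Ioc 0 τ, eLpNorm (Z t - Z (roundUp h t)) q ℙ ≤ w h := fun t ht => by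
    refine (hinc _ (hround ht) t ht).trans (hw ?_)
    rw [abs_sub_comm, abs_of_nonneg (sub_nonneg.2 (le_roundUp hh t))]
    exact roundUp_sub_le hh ht.1.le
  have hcomp := eLpNorm_tripleIntegral_sub_le (Y := Z ∘ roundUp h) B hp₁ hp
    (hτ ▸ by positivity) hZ
    (hZ.comp_measurable (((measurable_roundUp h).comp measurable_fst).prodMk measurable_snd))
    hwτ hincτ (fun s hs t ht => hincτ _ (hround hs) _ (hround ht)) hinch
  simp only [← tripleIntegral_comp_roundUp B hh, hτ]
  exact hcomp

end Grid

section SquareRootModulus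

lemma holderTriple_four_four_two_s11 : ENNReal.HolderTriple 4 4 2 := by
  have htriple : Real.HolderTriple 4 4 2 := ⟨by norm_num, by norm_num, by norm_num⟩
  simpa using htriple.ennrealOfReal

variable {Ω E G : Type*} [MeasurableSpace Ω] {ℙ : Measure Ω}
  [NormedAddCommGroup E] {Z : ℝ → Ω → E} {C τ h : ℝ}

lemma eLpNorm_sub_le_sqrt_of_integral_le {s t : ℝ} (hZs : AEStronglyMeasurable (Z s) ℙ)
    (hZt : AEStronglyMeasurable (Z t) ℙ) (hs : Integrable (fun ω => ‖Z s ω‖ ^ 4) ℙ)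
    (ht : Integrable (fun ω => ‖Z t ω‖ ^ 4) ℙ)
    (hinc : ∫ ω, ‖Z t ω - Z s ω‖ ^ 4 ∂ℙ ≤ C ^ 2 * |t - s| ^ 2) :
    eLpNorm (Z t - Z s) 4 ℙ ≤ ENNReal.ofReal √(|C| * |t - s|) := by
  have hfourth : √(|C| * |t - s|) ^ 4 = C ^ 2 * |t - s| ^ 2 := by
    rw [pow_mul _ 2 2, Real.sq_sqrt (by positivity), mul_pow, sq_abs C]
  exact eLpNorm_le_of_integral_norm_pow_le four_ne_zero (Real.sqrt_nonneg _)
    (integrable_norm_sub_pow four_ne_zero hZt hZs ht hs) (hinc.trans_eq hfourth.symm)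

variable [SFinite ℙ] [NormedSpace ℝ E] [NormedAddCommGroup G] [NormedSpace ℝ G] [CompleteSpace G]
  {M : ℕ}

lemma integral_norm_tripleIntegral_sub_tripleRiemannSum_sq_le (B : E →L[ℝ] E →L[ℝ] G)
    (hZ : StronglyMeasurable (Function.uncurry Z)) (hh : 0 < h) (hτ : M * h = τ)
    (hint : ∀ t ∈ Icc 0 τ, Integrable (fun ω => ‖Z t ω‖ ^ 4) ℙ)
    (hinc : ∀ s ∈ Icc 0 τ, ∀ t ∈ Icc 0 τ,
      ∫ ω, ‖Z t ω - Z s ω‖ ^ 4 ∂ℙ ≤ C ^ 2 * |t - s| ^ 2) :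
    ∫ ω, ‖tripleIntegral B (Z · ω) τ - tripleRiemannSum B (Z · ω) h M‖ ^ 2 ∂ℙ
      ≤ 16 * C ^ 2 * ‖B‖ ^ 2 * (τ ^ 7 * h) := by
  have := holderTriple_four_four_two_s11
  have hτ₀ : 0 ≤ τ := hτ ▸ by positivity
  have hmeas (t : ℝ) : AEStronglyMeasurable (Z t) ℙ :=
    (hZ.comp_measurable measurable_prodMk_left).aestronglyMeasurable
  let w (x : ℝ) : ℝ≥0∞ := ENNReal.ofReal √(|C| * x)
  have hw : Monotone w := fun x y hxy =>
    ENNReal.ofReal_le_ofReal (Real.sqrt_le_sqrt (by gcongr))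
  have hmodulus : ∀ s ∈ Ioc 0 τ, ∀ t ∈ Ioc 0 τ, eLpNorm (Z t - Z s) 4 ℙ ≤ w |t - s| :=
    fun s hs t ht =>
      have hs' := Ioc_subset_Icc_self hs
      have ht' := Ioc_subset_Icc_self ht
      eLpNorm_sub_le_sqrt_of_integral_le (hmeas s) (hmeas t) (hint s hs') (hint t ht')
        (hinc s hs' t ht')
  have herr := eLpNorm_tripleIntegral_sub_tripleRiemannSum_le (p := 2) B (by norm_num)
    (by norm_num) hZ hh hτ hw ENNReal.ofReal_ne_top hmodulus
  let bound : ℝ := τ ^ 3 * (4 * ‖B‖ * √(|C| * τ) * √(|C| * h))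
  have hbound : ENNReal.ofReal τ ^ 3 * (4 * ‖B‖ₑ * w τ * w h) = ENNReal.ofReal bound := by
    have hnorm : ENNReal.ofReal ‖B‖ = ‖B‖ₑ := ofReal_norm B
    rw [ENNReal.ofReal_mul (by positivity), ENNReal.ofReal_mul (by positivity),
      ENNReal.ofReal_mul (by positivity), ENNReal.ofReal_mul (by positivity),
      ENNReal.ofReal_pow hτ₀, hnorm, ENNReal.ofReal_ofNat]
  calc _ ≤ bound ^ 2 :=
        integral_norm_pow_le_of_eLpNorm_le two_ne_zero (by positivity) (herr.trans_eq hbound)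
    _ = τ ^ 6 * (16 * ‖B‖ ^ 2 * (√(|C| * τ) ^ 2 * √(|C| * h) ^ 2)) := by ring
    _ = 16 * |C| ^ 2 * ‖B‖ ^ 2 * (τ ^ 7 * h) := by
        rw [Real.sq_sqrt (by positivity), Real.sq_sqrt (by positivity)]
        ring
    _ = 16 * C ^ 2 * ‖B‖ ^ 2 * (τ ^ 7 * h) := by rw [sq_abs]

end SquareRootModulus

lemma integral_norm_smul_pow {Ω G : Type*} [MeasurableSpace Ω] {ℙ : Measure Ω}
    [NormedAddCommGroup G] [NormedSpace ℝ G] (c : ℝ) (f : Ω → G) (n : ℕ) :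
    ∫ ω, ‖c • f ω‖ ^ n ∂ℙ = |c| ^ n * ∫ ω, ‖f ω‖ ^ n ∂ℙ := by
  simp only [norm_smul, mul_pow, MeasureTheory.integral_const_mul, Real.norm_eq_abs]

theorem brownian_triple_integral_riemann_sum_error_general
    {Ω : Type*} [MeasurableSpace Ω] (ℙ : Measure Ω) [SFinite ℙ]
    {E G : Type*} [NormedAddCommGroup E] [NormedSpace ℝ E]
    [NormedAddCommGroup G] [NormedSpace ℝ G] [CompleteSpace G] (C : ℝ) :
    ∃ K : ℝ, 0 < K ∧
      ∀ (M : ℕ), 0 < M →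
      ∀ (B : E →ₗ[ℝ] E →ₗ[ℝ] G), (∀ u v, ‖B u v‖ ≤ ‖u‖ * ‖v‖) →
      ∀ (Z : ℝ → Ω → E), StronglyMeasurable (Function.uncurry Z) →
      ∀ (τ h : ℝ), 0 < h → M * h = τ →
        (∀ t ∈ Icc (0 : ℝ) τ, Integrable (fun ω => ‖Z t ω‖ ^ 4) ℙ) →
        (∀ s ∈ Icc (0 : ℝ) τ, ∀ t ∈ Icc (0 : ℝ) τ,
          ∫ ω, ‖Z t ω - Z s ω‖ ^ 4 ∂ℙ ≤ C ^ 2 * |t - s| ^ 2) →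
        (∫ ω, ‖(∫ t in (0 : ℝ)..τ, ∫ s in (0 : ℝ)..τ, ∫ r in (0 : ℝ)..τ,
                B (Z t ω - Z s ω) (Z t ω - Z r ω))
            - h ^ 3 • ∑ ℓ ∈ Finset.Icc 1 M, ∑ k ∈ Finset.Icc 1 M, ∑ j ∈ Finset.Icc 1 M,
                B (Z (ℓ * h) ω - Z (k * h) ω) (Z (ℓ * h) ω - Z (j * h) ω)‖ ^ 2 ∂ℙ)
          ≤ K * (τ ^ 7 * h)
        ∧ (∫ ω, ‖τ ^ (-3 : ℤ) • (∫ t in (0 : ℝ)..τ, ∫ s in (0 : ℝ)..τ, ∫ r in (0 : ℝ)..τ,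
                B (Z t ω - Z s ω) (Z t ω - Z r ω))
            - τ ^ (-3 : ℤ) • h ^ 3 •
                ∑ ℓ ∈ Finset.Icc 1 M, ∑ k ∈ Finset.Icc 1 M, ∑ j ∈ Finset.Icc 1 M,
                  B (Z (ℓ * h) ω - Z (k * h) ω) (Z (ℓ * h) ω - Z (j * h) ω)‖ ^ 2 ∂ℙ)
          ≤ K * (τ * h) := by
  refine ⟨16 * C ^ 2 + 1, by positivity, fun M hM B hB Z hZ τ h hh hτ hint hinc => ?_⟩
  have hτ₀ : 0 < τ := hτ ▸ by positivity
  let B' : E →L[ℝ] E →L[ℝ] G := B.mkContinuous₂ 1 (by simpa only [one_mul] using hB)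
  have hB' : ‖B'‖ ^ 2 ≤ 1 :=
    pow_le_one₀ B'.opNorm_nonneg (B.mkContinuous₂_norm_le zero_le_one _)
  have herr : ∫ ω, ‖tripleIntegral B' (Z · ω) τ - tripleRiemannSum B' (Z · ω) h M‖ ^ 2 ∂ℙ
      ≤ (16 * C ^ 2 + 1) * (τ ^ 7 * h) := by
    refine (integral_norm_tripleIntegral_sub_tripleRiemannSum_sq_le B' hZ hh hτ hint hinc).trans ?_
    gcongr
    nlinarith [sq_nonneg C]
  refine ⟨herr, ?_⟩
  simp only [← smul_sub]
  calc _ = |τ ^ (-3 : ℤ)| ^ 2 * _ := integral_norm_smul_pow _ _ 2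
    _ ≤ |τ ^ (-3 : ℤ)| ^ 2 * ((16 * C ^ 2 + 1) * (τ ^ 7 * h)) := by gcongr; exact herr
    _ = (16 * C ^ 2 + 1) * (τ * h) := by
      rw [sq_abs]
      field_simp

/-- Approximation of the matrix-valued Brownian triple integral by its
fine-mesh triple Riemann sum: with `τ = 1/M`, `h = τ²`,
`𝐁 = ∫_0^τ ∫_0^τ ∫_0^τ B(Z(t)-Z(s), Z(t)-Z(r)) ds dt dr` and
`𝐁^disc = h³ Σ_{ℓ,k,j=1}^M B(Z(ℓh)-Z(kh), Z(ℓh)-Z(jh))`, one has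
`𝔼‖𝐁 - 𝐁^disc‖² ≤ K τ⁹`, equivalently `𝔼‖τ⁻³𝐁 - τ⁻³𝐁^disc‖² ≤ K τ³`, with `K`
depending only on `C`. -/
theorem brownian_triple_integral_riemann_sum_error
    {Ω : Type*} [MeasurableSpace Ω] (ℙ : Measure Ω) [IsProbabilityMeasure ℙ]
    {E G : Type*} [NormedAddCommGroup E] [NormedSpace ℝ E] [CompleteSpace E]
    [NormedAddCommGroup G] [NormedSpace ℝ G] [CompleteSpace G]
    (C : ℝ) (hC : 0 ≤ C) :
    ∃ K : ℝ, 0 < K ∧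
      ∀ (M : ℕ), 0 < M →
      ∀ (B : E →ₗ[ℝ] E →ₗ[ℝ] G), (∀ u v, ‖B u v‖ ≤ ‖u‖ * ‖v‖) →
      ∀ (Z : ℝ → Ω → E),
        StronglyMeasurable (fun p : ℝ × Ω => Z p.1 p.2) →
      ∀ (τ h : ℝ), τ = 1 / (M : ℝ) → h = τ ^ 2 →
        (∀ t ∈ Icc (0 : ℝ) τ, Integrable (fun ω => ‖Z t ω‖ ^ 4) ℙ) →
        (∀ s ∈ Icc (0 : ℝ) τ, ∀ t ∈ Icc (0 : ℝ) τ,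
          ∫ ω, ‖Z t ω - Z s ω‖ ^ 4 ∂ℙ ≤ C ^ 2 * |t - s| ^ 2) →
        (∫ ω, ‖(∫ t in (0 : ℝ)..τ, ∫ s in (0 : ℝ)..τ, ∫ r in (0 : ℝ)..τ,
                B (Z t ω - Z s ω) (Z t ω - Z r ω))
            - h ^ 3 • ∑ ℓ ∈ Finset.Icc 1 M, ∑ k ∈ Finset.Icc 1 M, ∑ j ∈ Finset.Icc 1 M,
                B (Z (ℓ * h) ω - Z (k * h) ω) (Z (ℓ * h) ω - Z (j * h) ω)‖ ^ 2 ∂ℙ)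
          ≤ K * τ ^ 9
        ∧ (∫ ω, ‖τ ^ (-3 : ℤ) • (∫ t in (0 : ℝ)..τ, ∫ s in (0 : ℝ)..τ, ∫ r in (0 : ℝ)..τ,
                B (Z t ω - Z s ω) (Z t ω - Z r ω))
            - τ ^ (-3 : ℤ) • h ^ 3 •
                ∑ ℓ ∈ Finset.Icc 1 M, ∑ k ∈ Finset.Icc 1 M, ∑ j ∈ Finset.Icc 1 M,
                  B (Z (ℓ * h) ω - Z (k * h) ω) (Z (ℓ * h) ω - Z (j * h) ω)‖ ^ 2 ∂ℙ)
          ≤ K * τ ^ 3 := by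
  obtain ⟨K, hK, hle⟩ := brownian_triple_integral_riemann_sum_error_general (E := E) (G := G) ℙ C
  refine ⟨K, hK, fun M hM B hB Z hZ τ h hτ hh hint hinc => ?_⟩
  have herr := hle M hM B hB Z hZ τ h (by rw [hh, hτ]; positivity)
    (by rw [hh, hτ]; field_simp) hint hinc
  rwa [show τ ^ 7 * h = τ ^ 9 by rw [hh]; ring, show τ * h = τ ^ 3 by rw [hh]; ring] at herr
end
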